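/- arXiv:0909.2140 — 3 statements merged into one kernel-verified Lean document; each statement's English description precedes it below -/
import Mathlib

section
/- Let (X,T) and (Y,S) be invertible topological dynamical systems (T and S homeomorphisms) and π : (X,T) → (Y,S) a factor map. Then for every finite open cover U of X and every μ ∈ M(X,T), h_μ^+(T,U|Y) = h_μ(T,U|Y). -/
/-!
The inequality `hCond ≤ hPlus` is immediate: if a partition `α` refines `U`, then the iterated join
of `α` refines that of `U`.

For the converse, let `b` be a partition refining `U_0^{n-1}` of nearly minimal conditional entropy.
The atom of `b` containing `x` prescribes a member of `U` containing `T^i x` for each `i < n`. Take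
a Borel set `B` which does not return to itself before time `n` and whose translates `T^i B`,
`i < n`, cover all points without small period up to a set `E` of small measure (`exists_tower`); it
is obtained from a maximal Borel set not returning to itself for a very long time, and no ergodicity
or aperiodicity is needed. For a fixed level `C = T^j B` let `α` give the point `T^i x`, `x ∈ C`,
`i < n`, the member of `U` prescribed by `b` at `x`; give points of `E` and points of small period a
member of `U` chosen in advance. Then `α` refines `U`, and its names are determined by three pieces
of data (`exists_coding`):
* the restriction of `b` to `C`, read along the orbit;
* the restriction of the fixed choice to `E`, whose entropy is small since `E` is;
* the names of points of small period, which have a common period and thus entropy rate zero.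

The restrictions of `b` to the `n` disjoint levels have total conditional entropy at most
`H(b) + log (n + 1) + 1` (`cE_tower_sum`), hence for some level the entropy rate of `α` is at most
`H(b) / n` up to a term of order `log n / n` (`exists_label_le_log`). Replacing `b` by its join along
`T^n, T^{2n}, …`, which does not increase the entropy per unit of time, removes this term
(`exists_label_le`).

Invertibility of `S` makes `π⁻¹ B(Y)` exactly invariant under `T` and `T⁻¹`, so that composing with
`T` preserves conditional entropy. Partitions are represented by labelings `f : X → ι` with `ι`
finite, and conditional entropy is computed as the average of the entropies of the conditional
measures `condExpKernel μ m`, which reduces subadditivity and monotonicity to the unconditional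
case.
-/

open MeasureTheory Filter Topology Set
open scoped Classical

noncomputable section

namespace RelLocVP

variable {X Y Z : Type*}

/-- A finite cover of `X` by Borel (measurable) sets. -/
def IsBorelCover [MeasurableSpace X] (U : Finset (Set X)) : Prop :=
  (∀ A ∈ U, MeasurableSet A) ∧ ⋃₀ (U : Set (Set X)) = Set.univ

/-- A finite Borel partition of `X`. -/
def IsPartition [MeasurableSpace X] (α : Finset (Set X)) : Prop :=
  (∀ A ∈ α, MeasurableSet A) ∧ ⋃₀ (α : Set (Set X)) = Set.univ ∧
    ∀ A ∈ α, ∀ B ∈ α, A ≠ B → Disjoint A B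

/-- A finite open cover of `X`. -/
def IsOpenCover [TopologicalSpace X] (U : Finset (Set X)) : Prop :=
  (∀ A ∈ U, IsOpen A) ∧ ⋃₀ (U : Set (Set X)) = Set.univ

/-- `V` refines `U` (`V ⪰ U`): every member of `V` is contained in some member of `U`. -/
def Refines (V U : Finset (Set X)) : Prop := ∀ v ∈ V, ∃ u ∈ U, v ⊆ u

/-- The join `U ∨ V` of two finite covers. -/
def coverJoin (U V : Finset (Set X)) : Finset (Set X) := Finset.image₂ (· ∩ ·) U V

/-- `U_0^{n-1} = ⋁_{i=0}^{n-1} T^{-i} U`. -/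
def dynCover (T : X → X) (U : Finset (Set X)) : ℕ → Finset (Set X)
  | 0 => {Set.univ}
  | n + 1 => coverJoin (dynCover T U n) (U.image fun u => T^[n] ⁻¹' u)

/-- A subadditive sequence of continuous potentials (indices `n ≥ 1` are the relevant ones):
`f (m+n) ≤ f m + f n ∘ T^[m]`. -/
def IsSubadditiveSeq [TopologicalSpace X] (T : X → X) (f : ℕ → X → ℝ) : Prop :=
  (∀ n, 1 ≤ n → Continuous (f n)) ∧
    ∀ m n, 1 ≤ m → 1 ≤ n → ∀ x, f (m + n) x ≤ f m x + f n (T^[m] x)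

/-- Supremum norm of a function. -/
def supNorm (g : X → ℝ) : ℝ := ⨆ x : X, |g x|

/-- `μ(F) = lim_n (1/n) ∫ f_n dμ = inf_n (1/n) ∫ f_n dμ` (the two agree by subadditivity). -/
def seqAvg [MeasurableSpace X] (μ : Measure X) (f : ℕ → X → ℝ) : ℝ :=
  ⨅ n : ℕ, ((n : ℝ) + 1)⁻¹ * ∫ x, f (n + 1) x ∂μ

/-- `P_n(T,F,U,y)`: infimum over finite Borel covers `V` refining `U_0^{n-1}` of
`Σ_{v ∈ V} sup_{x ∈ v ∩ π⁻¹ y} exp (f_n x)` (the sup over an empty set being `0`,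
which is Mathlib's convention for `sSup ∅` in `ℝ`). -/
def PnFiber [MeasurableSpace X] (T : X → X) (π : X → Y) (f : ℕ → X → ℝ)
    (U : Finset (Set X)) (n : ℕ) (y : Y) : ℝ :=
  sInf { r : ℝ | ∃ V : Finset (Set X), IsBorelCover V ∧ Refines V (dynCover T U n) ∧
      r = ∑ v ∈ V, sSup ((fun x => Real.exp (f n x)) '' (v ∩ π ⁻¹' {y})) }

/-- `P(T,F,U,y) = limsup_n (1/n) log P_n(T,F,U,y)`. -/
def PFiber [MeasurableSpace X] (T : X → X) (π : X → Y) (f : ℕ → X → ℝ)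
    (U : Finset (Set X)) (y : Y) : ℝ :=
  Filter.limsup (fun n : ℕ => (n : ℝ)⁻¹ * Real.log (PnFiber T π f U n y)) Filter.atTop

/-- `P_n(T,F,U,Y) = sup_{ y ∈ Y } P_n(T,F,U,y)`. -/
def PnSup [MeasurableSpace X] (T : X → X) (π : X → Y) (f : ℕ → X → ℝ)
    (U : Finset (Set X)) (n : ℕ) : ℝ :=
  ⨆ y : Y, PnFiber T π f U n y

/-- `P(T,F,U|Y) = lim_n (1/n) log P_n(T,F,U,Y) = inf_n (1/n) log P_n(T,F,U,Y)`. -/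
def PCond [MeasurableSpace X] (T : X → X) (π : X → Y) (f : ℕ → X → ℝ)
    (U : Finset (Set X)) : ℝ :=
  ⨅ n : ℕ, ((n : ℝ) + 1)⁻¹ * Real.log (PnSup T π f U (n + 1))

section Entropy

variable [MeasurableSpace X] [MeasurableSpace Y]

/-- Conditional entropy `H_μ(α | m) = Σ_{A ∈ α} ∫ -E(1_A|m) log E(1_A|m) dμ`
of a finite partition `α` relative to a sub-σ-algebra `m`. -/
def condEntPartition (μ : Measure X) (m : MeasurableSpace X) (α : Finset (Set X)) : ℝ :=
  ∑ A ∈ α, ∫ x, Real.negMulLog ((μ[A.indicator (fun _ => (1 : ℝ)) | m]) x) ∂μ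

/-- `H_μ(U | Y)`: infimum of `H_μ(α | π⁻¹ B(Y))` over finite Borel partitions `α` refining `U`. -/
def HCond (μ : Measure X) (π : X → Y) (U : Finset (Set X)) : ℝ :=
  sInf { r : ℝ | ∃ α : Finset (Set X), IsPartition α ∧ Refines α U ∧
      r = condEntPartition μ (MeasurableSpace.comap π inferInstance) α }

/-- `h_μ(T,α|Y) = lim_n (1/n) H_μ(α_0^{n-1} | π⁻¹ B(Y))` (equals the infimum by subadditivity). -/
def hPart (T : X → X) (μ : Measure X) (π : X → Y) (α : Finset (Set X)) : ℝ :=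
  ⨅ n : ℕ, ((n : ℝ) + 1)⁻¹ *
    condEntPartition μ (MeasurableSpace.comap π inferInstance) (dynCover T α (n + 1))

/-- `h_μ(T,U|Y) = lim_n (1/n) H_μ(U_0^{n-1}|Y)` (equals the infimum by subadditivity). -/
def hCond (T : X → X) (μ : Measure X) (π : X → Y) (U : Finset (Set X)) : ℝ :=
  ⨅ n : ℕ, ((n : ℝ) + 1)⁻¹ * HCond μ π (dynCover T U (n + 1))

/-- `h_μ^+(T,U|Y)`: infimum of `h_μ(T,α|Y)` over finite Borel partitions `α` refining `U`. -/
def hPlus (T : X → X) (μ : Measure X) (π : X → Y) (U : Finset (Set X)) : ℝ :=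
  sInf { r : ℝ | ∃ α : Finset (Set X), IsPartition α ∧ Refines α U ∧ r = hPart T μ π α }

end Entropy


/-! ### Shannon entropy of finite labelings -/

/-- A labeling `f : X → ι` all of whose fibres are measurable. With `ι` finite, it stands for the
finite measurable partition of `X` into the fibres of `f` (some of which may be empty). -/
def Lab {ι : Type*} [MeasurableSpace X] (f : X → ι) : Prop := ∀ i, MeasurableSet (f ⁻¹' {i})

/-- The Shannon entropy of the finite labeling `f` under `ν`. -/
def shE {ι : Type*} [Fintype ι] [MeasurableSpace X] (ν : Measure X) (f : X → ι) : ℝ :=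
  ∑ i, Real.negMulLog (ν.real (f ⁻¹' {i}))

section Shannon

variable {ι κ : Type*} [MeasurableSpace X]

lemma Lab.preimage [Finite ι] {f : X → ι} (hf : Lab f) (s : Set ι) :
    MeasurableSet (f ⁻¹' s) := by
  have : f ⁻¹' s = ⋃ i ∈ s, f ⁻¹' {i} := by ext x; simp
  rw [this]
  exact MeasurableSet.biUnion (Set.to_countable s) fun i _ => hf i

lemma Lab.comp [Finite ι] {f : X → ι} (hf : Lab f) (h : ι → κ) : Lab (fun x => h (f x)) :=
  fun k => hf.preimage (h ⁻¹' {k})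

lemma Lab.prod {f : X → ι} {g : X → κ} (hf : Lab f) (hg : Lab g) :
    Lab (fun x => (f x, g x)) := by
  rintro ⟨i, k⟩
  have : (fun x => (f x, g x)) ⁻¹' {(i, k)} = f ⁻¹' {i} ∩ g ⁻¹' {k} := by ext x; simp
  rw [this]
  exact (hf i).inter (hg k)

lemma Lab.pi {J : Type*} [Finite J] {f : J → X → ι} (hf : ∀ j, Lab (f j)) :
    Lab (fun x j => f j x) := by
  intro w
  have : (fun x j => f j x) ⁻¹' {w} = ⋂ j, f j ⁻¹' {w j} := by
    ext x; simp [funext_iff]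
  rw [this]
  exact MeasurableSet.iInter fun j => hf j _

lemma Lab.comp_meas {f : X → ι} (hf : Lab f) {T : X → X} (hT : Measurable T) :
    Lab (fun x => f (T x)) := fun i => hT (hf i)

lemma Lab.ite_none {f : X → ι} (hf : Lab f) {C : Set X} (hC : MeasurableSet C) :
    Lab fun x => if x ∈ C then some (f x) else none := by
  rintro (_ | l)
  · have e1 : (fun x => if x ∈ C then some (f x) else none) ⁻¹' {none} = Cᶜ := by
      ext x; by_cases hx : x ∈ C <;> simp [hx]
    rw [e1]; exact hC.compl
  · have e2 : (fun x => if x ∈ C then some (f x) else none) ⁻¹' {some l} = f ⁻¹' {l} ∩ C := by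
      ext x; by_cases hx : x ∈ C <;> simp [hx]
    rw [e2]; exact (hf l).inter hC

/-- Gibbs' inequality, in the form comparing with an arbitrary nonnegative weight `q`. -/
lemma gibbs [Fintype ι] (p q : ι → ℝ) (hp : ∀ i, 0 ≤ p i) (hq : ∀ i, 0 ≤ q i)
    (h0 : ∀ i, q i = 0 → p i = 0) :
    ∑ i, Real.negMulLog (p i) ≤ ∑ i, -(p i * Real.log (q i)) + ∑ i, q i - ∑ i, p i := by
  rw [← Finset.sum_add_distrib, ← Finset.sum_sub_distrib]
  refine Finset.sum_le_sum fun i _ => ?_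
  rcases (hp i).eq_or_lt with h | h
  · simp [← h, hq i]
  · have hqi : 0 < q i := lt_of_le_of_ne (hq i) fun hh => h.ne' (h0 i hh.symm)
    have h1 := Real.log_le_sub_one_of_pos (div_pos hqi h)
    rw [Real.log_div hqi.ne' h.ne'] at h1
    have h2 := mul_le_mul_of_nonneg_left h1 h.le
    have h3 : p i * (q i / p i - 1) = q i - p i := by field_simp
    rw [Real.negMulLog]
    linarith

lemma fiber_le_comp (ν : Measure X) [IsProbabilityMeasure ν] (f : X → ι) (h : ι → κ) (i : ι) :
    ν.real (f ⁻¹' {i}) ≤ ν.real ((fun x => h (f x)) ⁻¹' {h i}) :=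
  measureReal_mono fun x hx => congrArg h hx

variable [Fintype ι] (ν : Measure X) [IsProbabilityMeasure ν]

lemma shE_nonneg (f : X → ι) : 0 ≤ shE ν f :=
  Finset.sum_nonneg fun _ _ => Real.negMulLog_nonneg measureReal_nonneg measureReal_le_one

lemma real_fiber_comp {f : X → ι} (hf : Lab f) (h : ι → κ) (k : κ) :
    ν.real ((fun x => h (f x)) ⁻¹' {k}) = ∑ i, if h i = k then ν.real (f ⁻¹' {i}) else 0 := by
  rw [← Finset.sum_filter, ← measureReal_biUnion_finset]
  · congr 1
    ext x
    simp
  · intro i _ j _ hij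
    exact Set.disjoint_left.2 fun x hx hy => hij (hx.symm.trans hy)
  · exact fun i _ => hf i

/-- Pushing the distribution of `f` forward along `h`. -/
lemma sum_fiber_comp [Fintype κ] {f : X → ι} (hf : Lab f) (h : ι → κ) (c : κ → ℝ) :
    ∑ k, ν.real ((fun x => h (f x)) ⁻¹' {k}) * c k = ∑ i, ν.real (f ⁻¹' {i}) * c (h i) := by
  simp_rw [real_fiber_comp ν hf h, Finset.sum_mul]
  rw [Finset.sum_comm]
  refine Finset.sum_congr rfl fun i _ => ?_
  rw [Finset.sum_eq_single (h i)]
  · simp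
  · intro k _ hk; simp [Ne.symm hk]
  · simp

lemma sum_fiber_eq_one {f : X → ι} (hf : Lab f) : ∑ i, ν.real (f ⁻¹' {i}) = 1 := by
  have h := sum_fiber_comp ν hf (fun _ => ()) (fun _ => 1)
  have h1 : (fun _ : X => ()) ⁻¹' {()} = Set.univ := by ext; simp
  simp only [mul_one] at h
  rw [← h]
  simp

lemma shE_comp_le [Fintype κ] {f : X → ι} (hf : Lab f) (h : ι → κ) :
    shE ν (fun x => h (f x)) ≤ shE ν f := by
  have h1 := sum_fiber_comp ν hf h
    (fun k => -Real.log (ν.real ((fun x => h (f x)) ⁻¹' {k})))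
  unfold shE Real.negMulLog
  simp only [mul_neg, neg_mul] at h1 ⊢
  rw [h1]
  refine Finset.sum_le_sum fun i _ => ?_
  rcases (measureReal_nonneg (μ := ν) (s := f ⁻¹' {i})).eq_or_lt with h0 | h0
  · simp [← h0]
  · have := Real.log_le_log h0 (fiber_le_comp ν f h i)
    have := mul_le_mul_of_nonneg_left this h0.le
    linarith

lemma shE_prod_le [Fintype κ] {f : X → ι} {g : X → κ} (hf : Lab f) (hg : Lab g) :
    shE ν (fun x => (f x, g x)) ≤ shE ν f + shE ν g := by
  have hfg := hf.prod hg
  set p : ι × κ → ℝ := fun z => ν.real ((fun x => (f x, g x)) ⁻¹' {z}) with hp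
  set a : ι → ℝ := fun i => ν.real (f ⁻¹' {i}) with ha
  set b : κ → ℝ := fun k => ν.real (g ⁻¹' {k}) with hb
  have hpa : ∀ z, p z ≤ a z.1 := fun z => fiber_le_comp ν (fun x => (f x, g x)) Prod.fst z
  have hpb : ∀ z, p z ≤ b z.2 := fun z => fiber_le_comp ν (fun x => (f x, g x)) Prod.snd z
  have hp0 : ∀ z, 0 ≤ p z := fun z => measureReal_nonneg
  have ha0 : ∀ z, 0 ≤ a z := fun z => measureReal_nonneg
  have hb0 : ∀ z, 0 ≤ b z := fun z => measureReal_nonneg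
  have h1 := gibbs p (fun z => a z.1 * b z.2) hp0 (fun z => mul_nonneg (ha0 _) (hb0 _)) (by
    intro z hz
    rcases mul_eq_zero.1 hz with h | h
    · exact le_antisymm (h ▸ hpa z) (hp0 z)
    · exact le_antisymm (h ▸ hpb z) (hp0 z))
  have h2 : ∑ z : ι × κ, a z.1 * b z.2 = 1 := by
    rw [Fintype.sum_prod_type]
    simp only [← Finset.mul_sum]
    rw [sum_fiber_eq_one ν hg]
    simp [ha, sum_fiber_eq_one ν hf]
  have h3 : ∑ z, p z = 1 := sum_fiber_eq_one ν hfg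
  have h4 : shE ν f = ∑ z, p z * -Real.log (a z.1) := by
    rw [← sum_fiber_comp ν hfg Prod.fst (fun i => -Real.log (a i))]
    simp [shE, Real.negMulLog, ha]
  have h5 : shE ν g = ∑ z, p z * -Real.log (b z.2) := by
    rw [← sum_fiber_comp ν hfg Prod.snd (fun i => -Real.log (b i))]
    simp [shE, Real.negMulLog, hb]
  have h6 : ∑ z, -(p z * Real.log (a z.1 * b z.2)) = shE ν f + shE ν g := by
    rw [h4, h5, ← Finset.sum_add_distrib]
    refine Finset.sum_congr rfl fun z _ => ?_
    rcases (hp0 z).eq_or_lt with h | h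
    · simp [← h]
    · rw [Real.log_mul (h.trans_le (hpa z)).ne' (h.trans_le (hpb z)).ne']
      ring
  have h7 : shE ν (fun x => (f x, g x)) = ∑ z, Real.negMulLog (p z) := rfl
  linarith

lemma shE_le_log_card {f : X → ι} (hf : Lab f) : shE ν f ≤ Real.log (Fintype.card ι) := by
  have h3 : ∑ z, ν.real (f ⁻¹' {z}) = 1 := sum_fiber_eq_one ν hf
  have hne : Nonempty ι := by
    by_contra h
    rw [not_nonempty_iff] at h
    simp at h3
  have hc : (0 : ℝ) < Fintype.card ι := by exact_mod_cast Fintype.card_pos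
  have h1 := gibbs (fun z => ν.real (f ⁻¹' {z})) (fun _ => (Fintype.card ι : ℝ)⁻¹)
    (fun _ => measureReal_nonneg) (fun _ => by positivity)
    (fun _ h => absurd h (by positivity))
  simp only [Finset.sum_neg_distrib, ← Finset.sum_mul, h3, Finset.sum_const, Finset.card_univ,
    nsmul_eq_mul, mul_inv_cancel₀ hc.ne', Real.log_inv] at h1
  unfold shE
  linarith

/-- A labeling that takes the value `none` outside a set of small measure has small entropy:
the bound is affine in the measure of that set, so that it can be integrated. -/
lemma shE_option_le {f : X → Option ι} (hf : Lab f) {s : ℝ} (hs : 0 < s) :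
    shE ν f ≤ ν.real {x | f x ≠ none} * (-Real.log s) + Fintype.card ι * s := by
  have h3 : ∑ z, ν.real (f ⁻¹' {z}) = 1 := sum_fiber_eq_one ν hf
  have h1 := gibbs (fun z => ν.real (f ⁻¹' {z})) (fun z => Option.elim z 1 (fun _ => s))
    (fun _ => measureReal_nonneg) (fun z => by cases z <;> simp [hs.le])
    (fun z h => by cases z <;> simp at h; exact absurd h hs.ne')
  rw [h3] at h1
  have h4 : ν.real {x | f x ≠ none} = ∑ i, ν.real (f ⁻¹' {some i}) := by
    have : {x | f x ≠ none} = ⋃ i ∈ (Finset.univ : Finset ι), f ⁻¹' {some i} := by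
      ext x; simp [Option.ne_none_iff_exists', ]
    rw [this, measureReal_biUnion_finset]
    · intro i _ j _ hij
      exact Set.disjoint_left.2 fun x hx hy =>
        hij (Option.some_injective _ (hx.symm.trans hy))
    · exact fun i _ => hf _
  simp only [Fintype.sum_option, Option.elim, Real.log_one, mul_zero, zero_add,
    Finset.sum_const, Finset.card_univ, nsmul_eq_mul, Finset.sum_neg_distrib,
    ← Finset.sum_mul] at h1
  rw [h4]
  unfold shE
  rw [Fintype.sum_option]
  linarith

end Shannon

/-- Let `B 0, …, B (n-1)` be disjoint. Labeling each `B j` by `b` and merging the rest into one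
class gives `n` labelings whose entropies add up to little more than the entropy of `b` alone:
off their trivial classes, they are together coarser than `b` joined with the index of the set `B j`
a point lies in. -/
lemma shE_tower_sum {L : Type*} [Fintype L] [MeasurableSpace X] (ν : Measure X)
    [IsProbabilityMeasure ν] {n : ℕ} {b : X → L} (hb : Lab b) {B : Fin n → Set X}
    (hB : ∀ j, MeasurableSet (B j)) (hd : Pairwise fun i j => Disjoint (B i) (B j)) :
    ∑ j, shE ν (fun x => if x ∈ B j then some (b x) else none)
      ≤ shE ν b + Real.log (n + 1) + 1 := by
  set c : X → Option (Fin n) := fun x => if h : ∃ j, x ∈ B j then some h.choose else none with hc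
  have hcs : ∀ x j, c x = some j ↔ x ∈ B j := by
    intro x j
    constructor
    · intro h
      by_cases hx : ∃ j, x ∈ B j
      · simp only [hc, hx, dif_pos, Option.some.injEq] at h
        exact h ▸ hx.choose_spec
      · simp [hc, hx] at h
    · intro h
      have hx : ∃ j, x ∈ B j := ⟨j, h⟩
      simp only [hc, hx, dif_pos, Option.some.injEq]
      by_contra hne
      exact Set.disjoint_left.1 (hd hne) hx.choose_spec h
  have hcp : ∀ j, c ⁻¹' {some j} = B j := fun j => by ext x; simp [hcs]
  have hcl : Lab c := by
    rintro (_ | j)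
    · have : c ⁻¹' {none} = (⋃ j, B j)ᶜ := by
        ext x
        simp only [Set.mem_preimage, Set.mem_singleton_iff, Set.mem_compl_iff, Set.mem_iUnion,
          ← hcs, Option.eq_none_iff_forall_ne_some, not_exists, ne_eq]
      rw [this]
      exact (MeasurableSet.iUnion hB).compl
    · rw [hcp]; exact hB j
  have h1 := shE_prod_le ν hb hcl
  have h2 := shE_le_log_card ν hcl
  simp only [Fintype.card_option, Fintype.card_fin, Nat.cast_add, Nat.cast_one] at h2
  have h3 : ∑ j : Fin n, ∑ l, Real.negMulLog (ν.real (b ⁻¹' {l} ∩ B j))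
      ≤ shE ν (fun x => (b x, c x)) := by
    unfold shE
    rw [Fintype.sum_prod_type, Finset.sum_comm]
    refine Finset.sum_le_sum fun l _ => ?_
    rw [Fintype.sum_option]
    have : ∀ j, (fun x => (b x, c x)) ⁻¹' {(l, some j)} = b ⁻¹' {l} ∩ B j := fun j => by
      ext x; simp [hcs]
    simp only [this]
    have := Real.negMulLog_nonneg (measureReal_nonneg (μ := ν)
      (s := (fun x => (b x, c x)) ⁻¹' {(l, none)})) measureReal_le_one
    linarith
  have h4 : ∀ j, shE ν (fun x => if x ∈ B j then some (b x) else none)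
      ≤ ν.real (B j) + ∑ l, Real.negMulLog (ν.real (b ⁻¹' {l} ∩ B j)) := by
    intro j
    unfold shE
    rw [Fintype.sum_option]
    have e1 : (fun x => if x ∈ B j then some (b x) else none) ⁻¹' {none} = (B j)ᶜ := by
      ext x; by_cases hx : x ∈ B j <;> simp [hx]
    have e2 : ∀ l, (fun x => if x ∈ B j then some (b x) else none) ⁻¹' {some l}
        = b ⁻¹' {l} ∩ B j := by
      intro l; ext x; by_cases hx : x ∈ B j <;> simp [hx]
    simp only [e1, e2]
    rw [probReal_compl_eq_one_sub (hB j)]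
    have := Real.negMulLog_le_one_sub_self (x := 1 - ν.real (B j))
      (by linarith [measureReal_le_one (μ := ν) (s := B j)])
    linarith
  have h5 : ∑ j, ν.real (B j) ≤ 1 := by
    rw [← measureReal_biUnion_finset (fun i _ j _ hij => hd hij) (fun j _ => hB j)]
    exact measureReal_le_one
  have h6 := Finset.sum_le_sum fun j (_ : j ∈ Finset.univ) => h4 j
  rw [Finset.sum_add_distrib] at h6
  linarith

/-! ### Conditional entropy of finite labelings -/

/-- The conditional entropy of a finite labeling given the sub-σ-algebra `m`: the average of its
Shannon entropies under the conditional measures of `μ` given `m`. -/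
def cE {ι : Type*} [Fintype ι] (m : MeasurableSpace X) [mX : MeasurableSpace X]
    [StandardBorelSpace X] (μ : Measure X) [IsProbabilityMeasure μ] (f : X → ι) : ℝ :=
  ∫ x, shE (ProbabilityTheory.condExpKernel μ m x) f ∂μ

/-- If `T` preserves `μ` and `T⁻¹ m = m`, conditioning on `m` commutes with composing with `T`. -/
lemma condExp_comp_of_invariant {m : MeasurableSpace X} [mX : MeasurableSpace X]
    {μ : Measure X} [IsProbabilityMeasure μ]
    (hm : m ≤ mX) {T : X → X} (hT : MeasurePreserving T μ μ)
    (hTm : m.comap T = m) {s : Set X} (hs : MeasurableSet s) :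
    μ[(T ⁻¹' s).indicator (fun _ => (1 : ℝ)) | m]
      =ᵐ[μ] fun x => (μ[s.indicator (fun _ => (1 : ℝ)) | m]) (T x) := by
  have hTmeas : Measurable[m, m] T := by
    rw [measurable_iff_comap_le, hTm]
  have hi : Integrable (μ[s.indicator (fun _ => (1 : ℝ)) | m]) μ := integrable_condExp
  refine (ae_eq_condExp_of_forall_setIntegral_eq hm
    ((integrable_const _).indicator (hT.measurable hs)) ?_ ?_ ?_).symm
  · exact fun A _ _ => ((hT.integrable_comp hi.aestronglyMeasurable).2 hi).integrableOn
  · intro A hA _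
    rw [← hTm] at hA
    obtain ⟨D, hD, rfl⟩ := hA
    have hD' : MeasurableSet D := hm _ hD
    have key : ∀ g : X → ℝ, AEStronglyMeasurable g μ →
        ∫ x in T ⁻¹' D, g (T x) ∂μ = ∫ x in D, g x ∂μ := fun g hg => by
      conv_rhs => rw [← hT.map_eq]
      rw [setIntegral_map hD' (by rwa [hT.map_eq]) hT.measurable.aemeasurable]
    have h2 : (T ⁻¹' s).indicator (fun _ => (1 : ℝ)) = fun x => s.indicator (fun _ => 1) (T x) := by
      ext x; simp [Set.indicator]
    rw [key _ hi.aestronglyMeasurable, h2,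
      key _ (measurable_const.indicator hs).aestronglyMeasurable,
      setIntegral_condExp hm ((integrable_const _).indicator hs) hD]
  · exact (stronglyMeasurable_condExp.comp_measurable hTmeas).aestronglyMeasurable

section Conditional

variable {ι κ : Type*} {m : MeasurableSpace X} [mX : MeasurableSpace X] [StandardBorelSpace X]
  {μ : Measure X} [IsProbabilityMeasure μ]

lemma measurable_condReal (hm : m ≤ mX) {s : Set X} (hs : MeasurableSet s) :
    Measurable fun x => (ProbabilityTheory.condExpKernel μ m x).real s :=
  ((ProbabilityTheory.measurable_condExpKernel hs).mono hm le_rfl).ennreal_toReal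

lemma integrable_condReal (hm : m ≤ mX) {s : Set X} (hs : MeasurableSet s) :
    Integrable (fun x => (ProbabilityTheory.condExpKernel μ m x).real s) μ :=
  Integrable.of_bound (measurable_condReal hm hs).aestronglyMeasurable 1
    (ae_of_all _ fun x => by
      rw [Real.norm_of_nonneg measureReal_nonneg]; exact measureReal_le_one)

lemma integral_condReal (hm : m ≤ mX) {s : Set X} (hs : MeasurableSet s) :
    ∫ x, (ProbabilityTheory.condExpKernel μ m x).real s ∂μ = μ.real s := by
  rw [integral_congr_ae (ProbabilityTheory.condExpKernel_ae_eq_condExp hm hs),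
    integral_condExp hm, integral_indicator hs]
  simp

lemma integrable_negMulLog_condReal (hm : m ≤ mX) {s : Set X} (hs : MeasurableSet s) :
    Integrable (fun x => Real.negMulLog ((ProbabilityTheory.condExpKernel μ m x).real s)) μ :=
  Integrable.of_bound
    (Real.continuous_negMulLog.measurable.comp (measurable_condReal hm hs)).aestronglyMeasurable 1
    (ae_of_all _ fun x => by
      rw [Real.norm_of_nonneg (Real.negMulLog_nonneg measureReal_nonneg measureReal_le_one)]
      have := Real.negMulLog_le_one_sub_self
        (measureReal_nonneg (μ := ProbabilityTheory.condExpKernel μ m x) (s := s))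
      have := measureReal_nonneg (μ := ProbabilityTheory.condExpKernel μ m x) (s := s)
      linarith)

variable [Fintype ι] [Fintype κ]

lemma integrable_shE (hm : m ≤ mX) {f : X → ι} (hf : Lab f) :
    Integrable (fun x => shE (ProbabilityTheory.condExpKernel μ m x) f) μ :=
  integrable_finsetSum _ fun i _ => integrable_negMulLog_condReal hm (hf i)

lemma cE_eq_sum (hm : m ≤ mX) {f : X → ι} (hf : Lab f) :
    cE m μ f =
      ∑ i, ∫ x, Real.negMulLog ((μ[(f ⁻¹' {i}).indicator (fun _ => (1 : ℝ)) | m]) x) ∂μ := by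
  unfold cE shE
  rw [integral_finsetSum _ fun i _ => integrable_negMulLog_condReal hm (hf i)]
  refine Finset.sum_congr rfl fun i _ => integral_congr_ae ?_
  filter_upwards [ProbabilityTheory.condExpKernel_ae_eq_condExp hm (hf i)] with x hx
  rw [hx]

lemma cE_nonneg (f : X → ι) : 0 ≤ cE m μ f :=
  integral_nonneg fun _ => shE_nonneg _ _

lemma cE_comp_le (hm : m ≤ mX) {f : X → ι} (hf : Lab f) (h : ι → κ) :
    cE m μ (fun x => h (f x)) ≤ cE m μ f :=
  integral_mono (integrable_shE hm (hf.comp h)) (integrable_shE hm hf)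
    fun _ => shE_comp_le _ hf h

lemma cE_prod_le (hm : m ≤ mX) {f : X → ι} {g : X → κ} (hf : Lab f) (hg : Lab g) :
    cE m μ (fun x => (f x, g x)) ≤ cE m μ f + cE m μ g := by
  unfold cE
  rw [← integral_add (integrable_shE hm hf) (integrable_shE hm hg)]
  exact integral_mono (integrable_shE hm (hf.prod hg))
    ((integrable_shE hm hf).add (integrable_shE hm hg)) fun _ => shE_prod_le _ hf hg

lemma cE_const [Unique ι] {f : X → ι} (hf : Lab f) : cE m μ f ≤ 0 := by
  have : ∀ x, shE (ProbabilityTheory.condExpKernel μ m x) f ≤ 0 := fun x =>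
    (shE_le_log_card _ hf).trans (by simp)
  exact integral_nonpos this

/-- A finite join of labelings, indexed by `Fin n`, has at most the sum of the entropies. -/
lemma cE_pi_le (hm : m ≤ mX) : ∀ (n : ℕ) {f : ℕ → X → ι} (_ : ∀ j, Lab (f j)),
    cE m μ (fun x (j : Fin n) => f j x) ≤ ∑ j ∈ Finset.range n, cE m μ (f j)
  | 0, f, hf => by
    simpa using cE_const (m := m) (μ := μ) (f := fun x (j : Fin 0) => f j x)
      (Lab.pi fun j : Fin 0 => hf j)
  | n + 1, f, hf => by
    have h1 := cE_prod_le (μ := μ) hm (f := fun x (j : Fin n) => f j x) (g := f n)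
      (Lab.pi fun j : Fin n => hf j) (hf n)
    have h2 := cE_comp_le (μ := μ) hm (f := fun x => ((fun j : Fin n => f j x), f n x))
      ((Lab.pi fun j : Fin n => hf j).prod (hf n))
      (fun z => (Fin.snoc (α := fun _ => ι) z.1 z.2 : Fin (n + 1) → ι))
    have h3 : (fun x => (Fin.snoc (α := fun _ => ι) (fun j : Fin n => f j x) (f n x) :
        Fin (n + 1) → ι)) = fun x (j : Fin (n + 1)) => f j x := by
      funext x j
      refine Fin.lastCases ?_ (fun i => ?_) j <;> simp
    simp only [h3] at h2
    rw [Finset.sum_range_succ]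
    have h4 := cE_pi_le hm n hf
    linarith

lemma cE_option_le (hm : m ≤ mX) {f : X → Option ι} (hf : Lab f) {s : ℝ} (hs : 0 < s) :
    cE m μ f ≤ μ.real {x | f x ≠ none} * (-Real.log s) + Fintype.card ι * s := by
  have hms : MeasurableSet {x | f x ≠ none} := hf.preimage {o | o ≠ none}
  rw [← integral_condReal (μ := μ) hm hms]
  have h := integral_mono (μ := μ) (integrable_shE hm hf)
    (((integrable_condReal hm hms).mul_const (-Real.log s)).add
      (integrable_const (Fintype.card ι * s)))
    fun x => shE_option_le (ProbabilityTheory.condExpKernel μ m x) hf hs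
  refine h.trans (le_of_eq ?_)
  simp only [Pi.add_apply]
  rw [integral_add ((integrable_condReal hm hms).mul_const _) (integrable_const _),
    integral_mul_const]
  simp

lemma cE_tower_sum (hm : m ≤ mX) {n : ℕ} {b : X → ι} (hb : Lab b) {B : Fin n → Set X}
    (hB : ∀ j, MeasurableSet (B j)) (hd : Pairwise fun i j => Disjoint (B i) (B j)) :
    ∑ j, cE m μ (fun x => if x ∈ B j then some (b x) else none)
      ≤ cE m μ b + Real.log (n + 1) + 1 := by
  have hl : ∀ j, Lab (fun x => if x ∈ B j then some (b x) else none) := fun j =>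
    hb.ite_none (hB j)
  unfold cE
  rw [← integral_finsetSum _ fun j _ => integrable_shE hm (hl j)]
  have h := integral_mono (μ := μ)
    (integrable_finsetSum Finset.univ fun j _ => integrable_shE hm (hl j))
    ((integrable_shE hm hb).add (integrable_const (Real.log (n + 1) + 1)))
    fun x => (shE_tower_sum (ProbabilityTheory.condExpKernel μ m x) hb hB hd).trans_eq
      (add_assoc _ _ _)
  refine h.trans (le_of_eq ?_)
  simp only [Pi.add_apply]
  rw [integral_add (integrable_shE hm hb) (integrable_const _), add_assoc]
  simp

lemma cE_comp_invariant (hm : m ≤ mX) {T : X → X} (hT : MeasurePreserving T μ μ)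
    (hTm : m.comap T = m) {f : X → ι} (hf : Lab f) :
    cE m μ (fun x => f (T x)) = cE m μ f := by
  rw [cE_eq_sum hm (hf.comp_meas hT.measurable), cE_eq_sum hm hf]
  refine Finset.sum_congr rfl fun i _ => ?_
  have h1 := condExp_comp_of_invariant hm hT hTm (hf i)
  have key : ∀ g : X → ℝ, AEStronglyMeasurable g μ → ∫ x, g x ∂μ = ∫ x, g (T x) ∂μ :=
    fun g hg => by
      conv_lhs => rw [← hT.map_eq]
      rw [integral_map hT.measurable.aemeasurable (by rwa [hT.map_eq])]
  rw [key (fun x => Real.negMulLog ((μ[(f ⁻¹' {i}).indicator (fun _ => (1 : ℝ)) | m]) x))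
    (Real.continuous_negMulLog.measurable.comp
    (stronglyMeasurable_condExp.mono hm).measurable).aestronglyMeasurable]
  refine integral_congr_ae ?_
  filter_upwards [h1] with x hx
  exact congrArg _ hx

lemma cE_iterate (hm : m ≤ mX) {T : X → X} (hT : MeasurePreserving T μ μ)
    (hTm : m.comap T = m) {f : X → ι} (hf : Lab f) (n : ℕ) :
    cE m μ (fun x => f (T^[n] x)) = cE m μ f := by
  induction n with
  | zero => rfl
  | succ n ih =>
    rw [← ih]
    exact cE_comp_invariant hm hT hTm (hf.comp_meas (hT.iterate n).measurable)

end Conditional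

/-! ### A Rokhlin tower off the points of small period -/

/-- A point that does not return to itself within time `M` has a neighbourhood that does not return
to itself within time `M`. -/
lemma exists_good_nhds [TopologicalSpace X] [T2Space X] {T : X → X} (hT : Continuous T) (M : ℕ)
    {x : X} (hx : ∀ i, 1 ≤ i → i < M → T^[i] x ≠ x) :
    ∃ W ∈ 𝓝 x, ∀ y ∈ W, ∀ i, 1 ≤ i → i < M → T^[i] y ∉ W := by
  have h1 : ∀ i, ∃ W ∈ 𝓝 x, 1 ≤ i → i < M → ∀ y ∈ W, T^[i] y ∉ W := by
    intro i
    by_cases hi : 1 ≤ i ∧ i < M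
    · obtain ⟨A, D, hA, hD, hAx, hDx, hAD⟩ := t2_separation (hx i hi.1 hi.2)
      refine ⟨D ∩ T^[i] ⁻¹' A, Filter.inter_mem (hD.mem_nhds hDx)
        ((hA.preimage (hT.iterate i)).mem_nhds hAx), fun _ _ y hy hy' => ?_⟩
      exact Set.disjoint_left.1 hAD hy.2 hy'.1
    · exact ⟨Set.univ, Filter.univ_mem, fun a b => absurd ⟨a, b⟩ hi⟩
  choose W hW hW' using h1
  refine ⟨⋂ i ∈ Set.Iio M, W i, (Filter.biInter_mem (Set.finite_Iio M)).2 fun i _ => hW i, ?_⟩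
  intro y hy i hi hiM hy'
  simp only [Set.mem_iInter] at hy hy'
  exact hW' i hi hiM y (hy i hiM) (hy' i hiM)

lemma iterate_inv_of_le {T R : X → X} (hTR : Function.LeftInverse T R) {i j : ℕ} (h : i ≤ j)
    (x : X) : T^[i] (R^[j] x) = R^[j - i] x := by
  obtain ⟨k, rfl⟩ := Nat.exists_eq_add_of_le h
  rw [Function.iterate_add_apply, hTR.iterate i, Nat.add_sub_cancel_left]

lemma iterate_inv_of_ge {T R : X → X} (hTR : Function.LeftInverse T R) {i j : ℕ} (h : j ≤ i)
    (x : X) : T^[i] (R^[j] x) = T^[i - j] x := by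
  obtain ⟨k, rfl⟩ := Nat.exists_eq_add_of_le h
  rw [add_comm, Function.iterate_add_apply, hTR.iterate j, Nat.add_sub_cancel]

/-- A measurable set `C` that does not return to itself within time `M`, maximal in the sense that
every point without a return to itself within time `M` has a translate in `C`. It is built greedily
from a countable cover by open sets that do not return to themselves. -/
lemma exists_marker [TopologicalSpace X] [T2Space X] [SecondCountableTopology X]
    [MeasurableSpace X] [BorelSpace X] {T R : X → X} (hT : Continuous T) (hR : Continuous R)
    (hRT : Function.LeftInverse R T) {M : ℕ} (hM : 1 ≤ M) :
    ∃ C : Set X, MeasurableSet C ∧ (∀ x ∈ C, ∀ i, 1 ≤ i → i < M → T^[i] x ∉ C) ∧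
      ∀ x, (∀ i, 1 ≤ i → i < M → T^[i] x ≠ x) → ∃ i < M, T^[i] x ∈ C ∨ R^[i] x ∈ C := by
  set S : Set (Set X) := insert ∅ {V ∈ TopologicalSpace.countableBasis X |
    ∀ y ∈ V, ∀ i, 1 ≤ i → i < M → T^[i] y ∉ V} with hS
  have hSc : S.Countable :=
    (((TopologicalSpace.countable_countableBasis X)).mono (Set.sep_subset _ _)).insert _
  obtain ⟨V, hV⟩ := hSc.exists_eq_range ⟨∅, Set.mem_insert _ _⟩
  have hVS : ∀ k, V k ∈ S := fun k => hV ▸ Set.mem_range_self k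
  have hVm : ∀ k, MeasurableSet (V k) := by
    intro k
    rcases hVS k with h | h
    · rw [h]; exact MeasurableSet.empty
    · exact (TopologicalSpace.isOpen_of_mem_countableBasis h.1).measurableSet
  have hVg : ∀ k, ∀ y ∈ V k, ∀ i, 1 ≤ i → i < M → T^[i] y ∉ V k := by
    intro k
    rcases hVS k with h | h
    · rw [h]; simp
    · exact h.2
  have hVc : ∀ x, (∀ i, 1 ≤ i → i < M → T^[i] x ≠ x) → ∃ k, x ∈ V k := by
    intro x hx
    obtain ⟨W, hW, hWg⟩ := exists_good_nhds hT M hx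
    obtain ⟨D, hD, hxD, hDW⟩ :=
      (TopologicalSpace.isBasis_countableBasis X).mem_nhds_iff.1 hW
    have : D ∈ S := Or.inr ⟨hD, fun y hy i h1 h2 h3 => hWg y (hDW hy) i h1 h2 (hDW h3)⟩
    rw [hV] at this
    obtain ⟨k, rfl⟩ := this
    exact ⟨k, hxD⟩
  let C : ℕ → Set X := fun k => Nat.rec ∅
    (fun k D => D ∪ (V k \ ⋃ i ∈ Set.Iio M, (T^[i] ⁻¹' D ∪ R^[i] ⁻¹' D))) k
  have hC : ∀ k, C (k + 1) = C k ∪ (V k \ ⋃ i ∈ Set.Iio M, (T^[i] ⁻¹' C k ∪ R^[i] ⁻¹' C k)) :=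
    fun k => rfl
  have hCm : ∀ k, MeasurableSet (C k) := by
    intro k
    induction k with
    | zero => exact MeasurableSet.empty
    | succ k ih =>
      rw [hC]
      refine ih.union ((hVm k).diff (MeasurableSet.biUnion (Set.to_countable _) fun i _ => ?_))
      exact ((hT.iterate i).measurable ih).union ((hR.iterate i).measurable ih)
  have hCmono : Monotone C := monotone_nat_of_le_succ fun k => by
    rw [hC]; exact Set.subset_union_left
  have hCg : ∀ k, ∀ x ∈ C k, ∀ i, 1 ≤ i → i < M → T^[i] x ∉ C k := by
    intro k
    induction k with
    | zero => intro x hx; exact absurd hx (Set.notMem_empty x)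
    | succ k ih =>
      intro x hx i h1 h2 hi
      rw [hC] at hx hi
      rcases hx with hx | ⟨hx, hx'⟩ <;> rcases hi with hi | ⟨hi, hi'⟩
      · exact ih x hx i h1 h2 hi
      · refine hi' (Set.mem_biUnion (x := i) h2 (Or.inr ?_))
        change R^[i] (T^[i] x) ∈ C k
        rwa [hRT.iterate i]
      · exact hx' (Set.mem_biUnion (x := i) h2 (Or.inl hi))
      · exact hVg k x hx i h1 h2 hi
  refine ⟨⋃ k, C k, MeasurableSet.iUnion hCm, ?_, ?_⟩
  · intro x hx i h1 h2 hi
    obtain ⟨k, hk⟩ := Set.mem_iUnion.1 hx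
    obtain ⟨l, hl⟩ := Set.mem_iUnion.1 hi
    exact hCg (max k l) x (hCmono (le_max_left _ _) hk) i h1 h2 (hCmono (le_max_right _ _) hl)
  · intro x hx
    obtain ⟨k, hk⟩ := hVc x hx
    by_cases h : x ∈ ⋃ i ∈ Set.Iio M, (T^[i] ⁻¹' C k ∪ R^[i] ⁻¹' C k)
    · simp only [Set.mem_iUnion, Set.mem_Iio] at h
      obtain ⟨i, hi, h⟩ := h
      exact ⟨i, hi, h.imp (fun h => Set.mem_iUnion.2 ⟨k, h⟩) fun h => Set.mem_iUnion.2 ⟨k, h⟩⟩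
    · refine ⟨0, hM, Or.inl (Set.mem_iUnion.2 ⟨k + 1, ?_⟩)⟩
      rw [hC]
      exact Or.inr ⟨hk, h⟩

/-- A Rokhlin tower of height `n` covering, up to measure `δ`, all points without a return to
themselves within some time `M`. The levels of the tower are `{x | R^[i] x ∈ B}` for `i < n`, where
`R` is the inverse of `T`. With `C` a marker set for `M ≥ n / δ`, the base consists of the points
visited a multiple of `n` steps after the last visit to `C` and whose next `n - 1` steps avoid `C`;
what is missed lies within `n` steps of a visit to `C`, and `C` has measure at most `1 / M`. -/
lemma exists_tower [TopologicalSpace X] [T2Space X] [SecondCountableTopology X]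
    [MeasurableSpace X] [BorelSpace X] {T R : X → X} (hT : Continuous T) (hR : Continuous R)
    (hRT : Function.LeftInverse R T) (hTR : Function.LeftInverse T R)
    {μ : Measure X} [IsProbabilityMeasure μ] (hμ : MeasurePreserving T μ μ)
    {n : ℕ} (hn : 1 ≤ n) {δ : ℝ} (hδ : 0 < δ) :
    ∃ (M : ℕ) (B : Set X), MeasurableSet B ∧ (∀ x ∈ B, ∀ i, 1 ≤ i → i < n → T^[i] x ∉ B) ∧
      μ.real {x | (∀ i, 1 ≤ i → i < M → T^[i] x ≠ x) ∧ ∀ i < n, R^[i] x ∉ B} ≤ δ := by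
  obtain ⟨M, hMδ⟩ := exists_nat_ge ((n : ℝ) / δ)
  have hn0 : (0 : ℝ) < n := by exact_mod_cast hn
  have hM0 : (0 : ℝ) < M := lt_of_lt_of_le (by positivity) hMδ
  have hM : 1 ≤ M := by exact_mod_cast hM0
  obtain ⟨C, hCm, hCg, hCmax⟩ := exists_marker hT hR hRT hM
  set B : Set X := {x | (∃ j : ℕ, R^[j * n] x ∈ C ∧ ∀ i < j * n, R^[i] x ∉ C) ∧
    ∀ i, 1 ≤ i → i < n → T^[i] x ∉ C} with hB
  have hTm : ∀ i, MeasurableSet (T^[i] ⁻¹' C) := fun i => (hT.iterate i).measurable hCm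
  have hRm : ∀ i, MeasurableSet (R^[i] ⁻¹' C) := fun i => (hR.iterate i).measurable hCm
  refine ⟨M, B, ?_, ?_, ?_⟩
  · have : B = (⋃ j : ℕ, (R^[j * n] ⁻¹' C ∩ ⋂ i, ⋂ _ : i < j * n, (R^[i] ⁻¹' C)ᶜ)) ∩
        ⋂ i, ⋂ _ : 1 ≤ i, ⋂ _ : i < n, (T^[i] ⁻¹' C)ᶜ := by
      ext x; simp [hB]
    rw [this]
    refine (MeasurableSet.iUnion fun j => (hRm _).inter ?_).inter ?_
    · exact MeasurableSet.iInter fun i => MeasurableSet.iInter fun _ => (hRm i).compl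
    · exact MeasurableSet.iInter fun i => MeasurableSet.iInter fun _ =>
        MeasurableSet.iInter fun _ => (hTm i).compl
  · rintro x ⟨⟨j, hj, hj'⟩, hx⟩ i h1 h2 ⟨⟨k, hk, hk'⟩, -⟩
    rcases lt_or_ge (k * n) i with h | h
    · rw [iterate_inv_of_le hRT h.le] at hk
      exact hx _ (by omega) (by omega) hk
    · -- otherwise `i` steps increase the time since the last visit by exactly `i`
      rw [iterate_inv_of_ge hRT h] at hk
      have e1 : j * n ≤ k * n - i := not_lt.1 fun hlt => hj' _ hlt hk
      have e2 : k * n ≤ j * n + i := not_lt.1 fun hlt => hk' _ hlt (by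
        rw [iterate_inv_of_ge hRT (Nat.le_add_left _ _), Nat.add_sub_cancel]
        exact hj)
      have e3 : k * n = j * n + i := by omega
      have e4 : (j * n + i) % n = i := by
        rw [add_comm, Nat.add_mul_mod_self_right, Nat.mod_eq_of_lt h2]
      rw [← e3, Nat.mul_mod_left] at e4
      omega
  · have hsub : {x | (∀ i, 1 ≤ i → i < M → T^[i] x ≠ x) ∧ ∀ i < n, R^[i] x ∉ B}
        ⊆ ⋃ i ∈ Finset.range n, T^[i] ⁻¹' C := by
      rintro x ⟨hx, hxB⟩
      have hret : ∃ a, R^[a] x ∈ C := by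
        have hx' : ∀ i, 1 ≤ i → i < M → T^[i] (R^[M] x) ≠ R^[M] x := by
          intro i h1 h2 h
          refine hx i h1 h2 ?_
          have := congrArg T^[M] h
          rwa [← Function.iterate_add_apply, add_comm, Function.iterate_add_apply,
            hTR.iterate M] at this
        obtain ⟨i, hi, h | h⟩ := hCmax _ hx'
        · exact ⟨_, by rwa [iterate_inv_of_le hTR hi.le] at h⟩
        · exact ⟨_, by rwa [← Function.iterate_add_apply] at h⟩
      set a := Nat.find hret with ha
      have haC : R^[a] x ∈ C := Nat.find_spec hret
      have hamin : ∀ i < a, R^[i] x ∉ C := fun i hi => Nat.find_min hret hi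
      have hr : a % n < n := Nat.mod_lt _ hn
      have hle : a % n ≤ a := Nat.mod_le _ _
      have hdiv : a / n * n + a % n = a := by rw [mul_comm]; exact Nat.div_add_mod a n
      have hnB := hxB _ hr
      simp only [hB, Set.mem_ofPred_eq, not_and, not_forall, not_not] at hnB
      obtain ⟨i, h1, h2, hi⟩ := hnB ⟨a / n, by rwa [← Function.iterate_add_apply, hdiv],
        fun i hi => by
          rw [← Function.iterate_add_apply]
          exact hamin _ (by omega)⟩
      rcases le_or_gt i (a % n) with h | h
      · rw [iterate_inv_of_le hTR h] at hi
        exact absurd hi (hamin _ (by omega))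
      · rw [iterate_inv_of_ge hTR h.le] at hi
        exact Set.mem_biUnion (x := i - a % n)
          (Finset.mem_coe.2 (Finset.mem_range.2 (by omega))) hi
    have hpre : ∀ i, μ.real (T^[i] ⁻¹' C) = μ.real C := fun i =>
      (hμ.iterate i).measureReal_preimage hCm.nullMeasurableSet
    have hMC : M * μ.real C ≤ 1 := by
      have h : ∑ i ∈ Finset.range M, μ.real (T^[i] ⁻¹' C) ≤ 1 := by
        rw [← measureReal_biUnion_finset _ fun i _ => hTm i]
        · exact measureReal_le_one
        · have key : ∀ i j, i < j → j < M → Disjoint (T^[i] ⁻¹' C) (T^[j] ⁻¹' C) := by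
            intro i j hij hj
            refine Set.disjoint_left.2 fun x hx hx' => ?_
            obtain ⟨k, rfl⟩ := Nat.exists_eq_add_of_lt hij
            refine hCg _ hx (k + 1) (by omega) (by omega) ?_
            rw [← Function.iterate_add_apply]
            have : k + 1 + i = i + k + 1 := by omega
            rwa [this]
          intro i hi j hj hij
          simp only [Finset.coe_range, Set.mem_Iio] at hi hj
          rcases lt_or_gt_of_ne hij with h | h
          · exact key i j h hj
          · exact (key j i h hi).symm
      simpa [hpre] using h
    calc _ ≤ μ.real (⋃ i ∈ Finset.range n, T^[i] ⁻¹' C) :=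
          measureReal_mono hsub (measure_ne_top μ _)
      _ ≤ ∑ i ∈ Finset.range n, μ.real (T^[i] ⁻¹' C) := measureReal_biUnion_finset_le _ _
      _ = n * μ.real C := by simp [hpre]
      _ ≤ δ := by
        have h1 : (n : ℝ) ≤ M * δ := (div_le_iff₀ hδ).1 hMδ
        have h2 : (0 : ℝ) ≤ μ.real C := measureReal_nonneg
        nlinarith

/-! ### Partitions as labelings -/

/-- The finite partition into the fibres of a labeling (together with `∅`, if some label is not
taken). -/
def parts {ι : Type*} [Fintype ι] (f : X → ι) : Finset (Set X) :=
  Finset.univ.image fun i => f ⁻¹' {i}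

lemma isPartition_parts {ι : Type*} [Fintype ι] [MeasurableSpace X] {f : X → ι} (hf : Lab f) :
    IsPartition (parts f) := by
  refine ⟨?_, ?_, ?_⟩
  · intro A hA
    obtain ⟨i, -, rfl⟩ := Finset.mem_image.1 hA
    exact hf i
  · refine Set.eq_univ_of_forall fun x => ⟨f ⁻¹' {f x}, ?_, rfl⟩
    exact Finset.mem_coe.2 (Finset.mem_image_of_mem _ (Finset.mem_univ _))
  · intro A hA D hD hne
    obtain ⟨i, -, rfl⟩ := Finset.mem_image.1 hA
    obtain ⟨j, -, rfl⟩ := Finset.mem_image.1 hD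
    refine Set.disjoint_left.2 fun x hx hy => hne ?_
    have : i = j := hx.symm.trans hy
    rw [this]

lemma exists_parts_eq [MeasurableSpace X] {α : Finset (Set X)} (hα : IsPartition α) :
    ∃ f : X → ↥α, Lab f ∧ parts f = α ∧ ∀ x, x ∈ (f x : Set X) := by
  have h1 : ∀ x, ∃ A : ↥α, x ∈ (A : Set X) := by
    intro x
    obtain ⟨A, hA, hx⟩ := (hα.2.1 ▸ Set.mem_univ x : x ∈ ⋃₀ (α : Set (Set X)))
    exact ⟨⟨A, hA⟩, hx⟩
  choose f hf using h1
  have h2 : ∀ A : ↥α, f ⁻¹' {A} = A := by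
    intro A
    ext x
    constructor
    · intro hx
      have : f x = A := hx
      exact this ▸ hf x
    · intro hx
      by_contra hne
      exact Set.disjoint_left.1 (hα.2.2 _ (f x).2 _ A.2 fun h => hne (Subtype.ext h)) (hf x) hx
  refine ⟨f, fun A => by rw [h2]; exact hα.1 _ A.2, ?_, hf⟩
  ext A
  simp [parts, h2]

lemma condEntPartition_parts {ι : Type*} [Fintype ι] {m : MeasurableSpace X}
    [mX : MeasurableSpace X] [StandardBorelSpace X] {μ : Measure X} [IsProbabilityMeasure μ]
    (hm : m ≤ mX) {f : X → ι} (hf : Lab f) : condEntPartition μ m (parts f) = cE m μ f := by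
  rw [cE_eq_sum hm hf]
  unfold condEntPartition parts
  refine Finset.sum_image_of_pairwise_eq_zero fun i _ j _ hij h => ?_
  -- distinct labels with the same fibre both have empty fibre
  have he : f ⁻¹' {i} = ∅ := by
    refine Set.eq_empty_of_forall_notMem fun x hx => hij ?_
    have hx' : x ∈ f ⁻¹' {j} := h ▸ hx
    exact hx.symm.trans hx'
  rw [he]
  simp

lemma dynCover_parts {ι : Type*} [Fintype ι] (T : X → X) (f : X → ι) (n : ℕ) :
    dynCover T (parts f) n = parts fun x (j : Fin n) => f (T^[j] x) := by
  induction n with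
  | zero =>
    ext s
    simp only [dynCover, Finset.mem_singleton, parts, Finset.mem_image, Finset.mem_univ, true_and]
    have : ∀ w : Fin 0 → ι, (fun x (j : Fin 0) => f (T^[j] x)) ⁻¹' {w} = Set.univ := fun w => by
      ext x; simp [Subsingleton.elim _ w]
    constructor
    · rintro rfl; exact ⟨Fin.elim0, this _⟩
    · rintro ⟨w, rfl⟩; exact this _
  | succ n ih =>
    have key : ∀ (w : Fin (n + 1) → ι), (fun x (j : Fin (n + 1)) => f (T^[j] x)) ⁻¹' {w}
        = (fun x (j : Fin n) => f (T^[j] x)) ⁻¹' {fun j => w j.castSucc} ∩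
          T^[n] ⁻¹' (f ⁻¹' {w (Fin.last n)}) := by
      intro w
      ext x
      simp [funext_iff, Fin.forall_fin_succ']
    ext s
    simp only [dynCover, ih, coverJoin, Finset.mem_image₂]
    simp only [parts, Finset.mem_image, Finset.mem_univ, true_and]
    constructor
    · rintro ⟨_, ⟨w, rfl⟩, _, ⟨_, ⟨i, rfl⟩, rfl⟩, rfl⟩
      exact ⟨Fin.snoc (α := fun _ => ι) w i, by rw [key]; simp⟩
    · rintro ⟨w, rfl⟩
      exact ⟨_, ⟨_, rfl⟩, _, ⟨_, ⟨w (Fin.last n), rfl⟩, rfl⟩, (key w).symm⟩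

lemma mem_dynCover {T : X → X} {U : Finset (Set X)} {n : ℕ} {s : Set X} :
    s ∈ dynCover T U n ↔
      ∃ w : ℕ → Set X, (∀ i < n, w i ∈ U) ∧ s = {x | ∀ i < n, T^[i] x ∈ w i} := by
  induction n generalizing s with
  | zero => simp [dynCover]
  | succ n ih =>
    simp only [dynCover, coverJoin, Finset.mem_image₂, Finset.mem_image]
    constructor
    · rintro ⟨a, ha, _, ⟨u, hu, rfl⟩, rfl⟩
      obtain ⟨w, hw, rfl⟩ := ih.1 ha
      refine ⟨fun i => if i < n then w i else u, fun i _ => ?_, ?_⟩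
      · by_cases h : i < n
        · simpa [h] using hw i h
        · simpa [h] using hu
      · ext x
        simp only [Set.mem_inter_iff, Set.mem_ofPred_eq, Set.mem_preimage]
        constructor
        · rintro ⟨h1, h2⟩ i hi
          by_cases h : i < n
          · simpa [h] using h1 i h
          · obtain rfl : i = n := by omega
            simpa using h2
        · intro h
          exact ⟨fun i hi => by simpa [hi] using h i (by omega), by simpa using h n (by omega)⟩
    · rintro ⟨w, hw, rfl⟩
      refine ⟨_, ih.2 ⟨w, fun i hi => hw i (by omega), rfl⟩, _, ⟨w n, hw n (by omega), rfl⟩, ?_⟩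
      ext x
      simp only [Set.mem_inter_iff, Set.mem_ofPred_eq, Set.mem_preimage, Nat.lt_succ_iff_lt_or_eq]
      constructor
      · rintro ⟨h1, h2⟩ i (hi | rfl)
        exacts [h1 i hi, h2]
      · exact fun h => ⟨fun i hi => h i (Or.inl hi), h n (Or.inr rfl)⟩

lemma refines_dynCover (T : X → X) {α U : Finset (Set X)} (h : Refines α U) (n : ℕ) :
    Refines (dynCover T α n) (dynCover T U n) := by
  intro v hv
  obtain ⟨w, hw, rfl⟩ := mem_dynCover.1 hv
  have : ∀ i, ∃ u, i < n → u ∈ U ∧ w i ⊆ u := by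
    intro i
    by_cases hi : i < n
    · obtain ⟨u, hu, hwu⟩ := h _ (hw i hi)
      exact ⟨u, fun _ => ⟨hu, hwu⟩⟩
    · exact ⟨∅, fun h => absurd h hi⟩
  choose u hu using this
  exact ⟨_, mem_dynCover.2 ⟨u, fun i hi => (hu i hi).1, rfl⟩,
    fun x hx i hi => (hu i hi).2 (hx i hi)⟩

/-- A finite measurable cover admits a measurable choice of a member containing each point. -/
lemma exists_selection [MeasurableSpace X] {U : Finset (Set X)} (hU : IsBorelCover U) :
    ∃ a : X → ↥U, Lab a ∧ ∀ x, x ∈ (a x : Set X) := by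
  let e := Fintype.equivFin ↥U
  have h1 : ∀ x, ∃ u : ↥U, x ∈ (u : Set X) ∧ ∀ v : ↥U, x ∈ (v : Set X) → e u ≤ e v := by
    intro x
    obtain ⟨A, hA, hx⟩ := (hU.2 ▸ Set.mem_univ x : x ∈ ⋃₀ (U : Set (Set X)))
    obtain ⟨u, hu, hmin⟩ := Set.exists_min_image {u : ↥U | x ∈ (u : Set X)} e
      (Set.toFinite _) ⟨⟨A, hA⟩, hx⟩
    exact ⟨u, hu, hmin⟩
  choose a ha hmin using h1
  refine ⟨a, fun u => ?_, ha⟩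
  have : a ⁻¹' {u} = (u : Set X) ∩ ⋂ v : ↥U, ⋂ _ : e v < e u, (v : Set X)ᶜ := by
    ext x
    simp only [Set.mem_preimage, Set.mem_singleton_iff, Set.mem_inter_iff, Set.mem_iInter,
      Set.mem_compl_iff]
    constructor
    · rintro rfl
      exact ⟨ha x, fun v hv hx => absurd (hmin x v hx) (not_le.2 hv)⟩
    · rintro ⟨hx, h⟩
      refine e.injective (le_antisymm (hmin x u hx) (not_lt.1 fun hlt => h _ hlt (ha x)))
  rw [this]
  exact (hU.1 _ u.2).inter
    (MeasurableSet.iInter fun v => MeasurableSet.iInter fun _ => (hU.1 _ v.2).compl)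

/-! ### Coding a labeling of long words by a partition -/

section Coding

/-- The points with a period in `[1, M)`. -/
def perSet (T : X → X) (M : ℕ) : Set X := {x | ∃ i, 1 ≤ i ∧ i < M ∧ T^[i] x = x}

lemma iterate_mem_perSet {T : X → X} (hinj : Function.Injective T) {M : ℕ} (k : ℕ) {x : X} :
    T^[k] x ∈ perSet T M ↔ x ∈ perSet T M := by
  unfold perSet
  refine exists_congr fun i => and_congr_right fun _ => and_congr_right fun _ => ?_
  rw [← Function.iterate_add_apply, add_comm, Function.iterate_add_apply]
  exact (hinj.iterate k).eq_iff

lemma iterate_mod_of_mem_perSet {T : X → X} {M : ℕ} {x : X} (hx : x ∈ perSet T M) (k : ℕ) :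
    T^[k % M.factorial] x = T^[k] x := by
  obtain ⟨i, hi, hiM, hix⟩ := hx
  have h : Function.IsPeriodicPt T M.factorial x :=
    (show Function.IsPeriodicPt T i x from hix).trans_dvd (Nat.dvd_factorial hi hiM.le)
  exact h.iterate_mod_apply k

lemma measurableSet_perSet [TopologicalSpace X] [T2Space X] [MeasurableSpace X] [BorelSpace X]
    {T : X → X} (hT : Continuous T) (M : ℕ) : MeasurableSet (perSet T M) := by
  have : perSet T M = ⋃ i ∈ Finset.Ico 1 M, {x | T^[i] x = x} := by
    ext x; simp [perSet, and_assoc]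
  rw [this]
  exact Finset.measurableSet_biUnion _ fun i _ =>
    (isClosed_eq (hT.iterate i) continuous_id).measurableSet

variable {m : MeasurableSpace X} [mX : MeasurableSpace X] [StandardBorelSpace X]
  {μ : Measure X} [IsProbabilityMeasure μ]

lemma cE_name_le {ι : Type*} [Fintype ι] (hm : m ≤ mX) {T : X → X}
    (hT : MeasurePreserving T μ μ) (hTm : m.comap T = m) {f : X → ι} (hf : Lab f) (N : ℕ) :
    cE m μ (fun x (j : Fin N) => f (T^[j] x)) ≤ N * cE m μ f := by
  refine (cE_pi_le hm N (f := fun j x => f (T^[j] x))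
    fun j => hf.comp_meas (hT.iterate j).measurable).trans (le_of_eq ?_)
  simp [cE_iterate hm hT hTm hf]

variable [TopologicalSpace X] [T2Space X] [BorelSpace X]

/-- The coding step. The label `b x` prescribes labels `s (b x) i` for `T^[i] x`, `i < n`. Reading
`b` only on visits to `C` determines a labeling `α`, except on periodic points of bounded period
and on the set of points that have not visited `C` during the last `n` steps, where `α` is the
given `a₀`. The entropy rate of `α` is bounded by the entropy of `b` restricted to `C` and the
entropy of `a₀` restricted to the latter set, as periodic points contribute nothing. -/
lemma exists_coding {L κ : Type*} [Fintype L] [Fintype κ] (hm : m ≤ mX) {T R : X → X}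
    (hT : Continuous T) (hRT : Function.LeftInverse R T) (hTR : Function.LeftInverse T R)
    (hμT : MeasurePreserving T μ μ) (hμR : MeasurePreserving R μ μ)
    (hTm : m.comap T = m) (hRm : m.comap R = m) {n : ℕ} (hn : 1 ≤ n)
    {b : X → L} (hb : Lab b) {a₀ : X → κ} (ha₀ : Lab a₀) {V : κ → Set X} {s : L → ℕ → κ}
    (hV : ∀ x, x ∈ V (a₀ x)) (hs : ∀ x, ∀ i < n, T^[i] x ∈ V (s (b x) i))
    {C : Set X} (hC : MeasurableSet C) {M : ℕ} {E : Set X}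
    (hE : E = (perSet T M)ᶜ ∩ {x | ∀ i < n, R^[i] x ∉ C}) (hEm : MeasurableSet E)
    {ε : ℝ} (hε : 0 < ε) :
    ∃ α : X → κ, Lab α ∧ (∀ x, x ∈ V (α x)) ∧ ∃ N : ℕ,
      ((N : ℝ) + 1)⁻¹ * cE m μ (fun x (j : Fin (N + 1)) => α (T^[j] x))
        ≤ cE m μ (fun x => if x ∈ C then some (b x) else none)
          + cE m μ (fun x => if x ∈ E then some (a₀ x) else none) + ε := by
  set P := perSet T M with hPdef
  have hP : MeasurableSet P := measurableSet_perSet hT M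
  set γ : X → Option L := fun x => if x ∈ C then some (b x) else none with hγdef
  set ζ : X → Option κ := fun x => if x ∈ E then some (a₀ x) else none with hζdef
  set ρ : X → Option κ := fun x => if x ∈ P then some (a₀ x) else none with hρdef
  have hγ : Lab γ := hb.ite_none hC
  have hζ : Lab ζ := ha₀.ite_none hEm
  have hρ : Lab ρ := ha₀.ite_none hP
  obtain ⟨x₀⟩ : Nonempty X := μ.nonempty_of_neZero
  let F : Option κ × (Fin n → Option L) × Option κ → κ := fun z =>
    z.1.getD (if h : ∃ p : Fin n × L, z.2.1 p.1 = some p.2 then s h.choose.2 h.choose.1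
      else z.2.2.getD (a₀ x₀))
  let α : X → κ := fun x => F (ρ x, fun i => γ (R^[i] x), ζ x)
  have hα : Lab α :=
    (hρ.prod ((Lab.pi fun i : Fin n => hγ.comp_meas (hμR.iterate i).measurable).prod hζ)).comp F
  have hmem : ∀ x, x ∈ V (α x) := by
    intro x
    by_cases hxP : x ∈ P
    · have : α x = a₀ x := by simp [α, F, ρ, hxP]
      rw [this]; exact hV x
    by_cases h : ∃ p : Fin n × L, γ (R^[p.1] x) = some p.2
    · have h1 : α x = s h.choose.2 h.choose.1 := by
        simp only [α, F, ρ, hxP, if_false, Option.getD_none]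
        rw [dif_pos h]
      have h2 : b (R^[h.choose.1] x) = h.choose.2 := by
        have h3 := h.choose_spec
        simp only [γ] at h3
        split_ifs at h3 with h4
        exact Option.some.inj h3
      rw [h1, ← h2]
      have h5 := hs (R^[h.choose.1] x) h.choose.1 h.choose.1.2
      rwa [hTR.iterate] at h5
    · have hxE : x ∈ E := by
        rw [hE]
        refine ⟨hxP, fun i hi hiC => h ⟨(⟨i, hi⟩, b (R^[i] x)), ?_⟩⟩
        simp [γ, hiC]
      have h1 : α x = a₀ x := by
        simp only [α, F, ρ, hxP, if_false, Option.getD_none]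
        rw [dif_neg h]
        simp [ζ, hxE]
      rw [h1]; exact hV x
  refine ⟨α, hα, hmem, ?_⟩
  have hfac : 0 < M.factorial := M.factorial_pos
  set K := cE m μ (fun x (j : Fin M.factorial) => ρ (T^[j] x)) with hK
  obtain ⟨N, hN⟩ := exists_nat_ge ((K + n * cE m μ γ) / ε)
  refine ⟨N, ?_⟩
  have hLρ := Lab.pi fun j : Fin M.factorial => hρ.comp_meas (hμT.iterate j).measurable
  have hLγ := Lab.pi fun j : Fin (N + n) => hγ.comp_meas (hμT.iterate j).measurable
  have hLγ' := hLγ.comp_meas (hμR.iterate (n - 1)).measurable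
  have hLζ := Lab.pi fun j : Fin (N + 1) => hζ.comp_meas (hμT.iterate j).measurable
  -- the name of `α` is a function of the names of `ρ`, of `γ` from time `1 - n`, and of `ζ`
  let G : (Fin M.factorial → Option κ) × (Fin (N + n) → Option L) × (Fin (N + 1) → Option κ) →
      Fin (N + 1) → κ := fun z k =>
    F (z.1 ⟨k % M.factorial, Nat.mod_lt _ hfac⟩,
      fun i => z.2.1 ⟨k + (n - 1) - i, by omega⟩, z.2.2 k)
  have hG : (fun x (k : Fin (N + 1)) => α (T^[k] x)) = fun x =>
      G (fun j => ρ (T^[j] x), fun j => γ (T^[j] (R^[n - 1] x)), fun j => ζ (T^[j] x)) := by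
    funext x k
    have e1 : ρ (T^[k % M.factorial] x) = ρ (T^[k] x) := by
      by_cases hx : x ∈ P
      · rw [iterate_mod_of_mem_perSet hx]
      · simp only [ρ, hPdef, iterate_mem_perSet hRT.injective]
        simp only [← hPdef, hx, if_false]
    have e2 : ∀ i : Fin n, T^[k + (n - 1) - i] (R^[n - 1] x) = R^[i] (T^[k] x) := by
      intro i
      have h1 : T^[k] x = T^[i] (T^[k + (n - 1) - i] (R^[n - 1] x)) := by
        rw [← Function.iterate_add_apply, show (i : ℕ) + (k + (n - 1) - i) = k + (n - 1) by omega,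
          Function.iterate_add_apply, hTR.iterate]
      rw [h1, hRT.iterate]
    simp only [G, α, e1, e2]
  have hc := cE_comp_le (μ := μ) hm (hLρ.prod (hLγ'.prod hLζ)) G
  rw [← hG] at hc
  have h1 := cE_prod_le (μ := μ) hm hLρ (hLγ'.prod hLζ)
  have h2 := cE_prod_le (μ := μ) hm hLγ' hLζ
  have h3 := cE_iterate hm hμR hRm hLγ (n - 1)
  have h4 := cE_name_le hm hμT hTm hγ (N + n)
  have h5 := cE_name_le hm hμT hTm hζ (N + 1)
  have hN1 : (0 : ℝ) < N + 1 := by positivity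
  rw [inv_mul_le_iff₀ hN1]
  have h6 : K + n * cE m μ γ ≤ N * ε := by rwa [div_le_iff₀ hε] at hN
  have h7 : 0 ≤ cE m μ γ := cE_nonneg γ
  push_cast at h4 h5
  have h8 : cE m μ (fun x (k : Fin (N + 1)) => α (T^[k] x)) ≤ K + (N + n) * cE m μ γ
      + (N + 1) * cE m μ ζ := by
    linarith
  nlinarith

variable [SecondCountableTopology X]

/-- A labeling of the words of length `n` by an arbitrary `b` can be turned into a labeling of the
points whose entropy rate is at most that of `b`, up to a logarithmic error. Among the `n` levels
of a tower, one carries at most the `n`-th part of the entropy of `b` plus this error. -/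
lemma exists_label_le_log {L κ : Type*} [Fintype L] [Fintype κ] (hm : m ≤ mX) {T R : X → X}
    (hT : Continuous T) (hR : Continuous R)
    (hRT : Function.LeftInverse R T) (hTR : Function.LeftInverse T R)
    (hμT : MeasurePreserving T μ μ) (hμR : MeasurePreserving R μ μ)
    (hTm : m.comap T = m) (hRm : m.comap R = m) {n : ℕ} (hn : 1 ≤ n)
    {b : X → L} (hb : Lab b) {a₀ : X → κ} (ha₀ : Lab a₀) {V : κ → Set X} {s : L → ℕ → κ}
    (hV : ∀ x, x ∈ V (a₀ x)) (hs : ∀ x, ∀ i < n, T^[i] x ∈ V (s (b x) i))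
    {ε : ℝ} (hε : 0 < ε) :
    ∃ α : X → κ, Lab α ∧ (∀ x, x ∈ V (α x)) ∧ ∃ N : ℕ,
      ((N : ℝ) + 1)⁻¹ * cE m μ (fun x (j : Fin (N + 1)) => α (T^[j] x))
        ≤ (n : ℝ)⁻¹ * (cE m μ b + Real.log (n + 1) + 1) + ε := by
  have hn0 : (0 : ℝ) < n := by exact_mod_cast hn
  -- `t` and `δ` make the entropy of a labeling supported on a set of measure `δ` small
  set c : ℝ := (Fintype.card κ : ℝ) with hcdef
  have hc0 : 0 ≤ c := by positivity
  set t : ℝ := min 1 (ε / (4 * (c + 1))) with htdef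
  have ht0 : 0 < t := lt_min one_pos (by positivity)
  have hct : c * t ≤ ε / 4 := by
    have : t ≤ ε / (4 * (c + 1)) := min_le_right _ _
    rw [le_div_iff₀ (by positivity)] at this
    nlinarith
  have hlt : 0 ≤ -Real.log t := by
    have := Real.log_nonpos ht0.le (min_le_left _ _); linarith
  set δ : ℝ := ε / (4 * (-Real.log t + 1)) with hδdef
  have hδ0 : 0 < δ := by positivity
  have hδt : δ * (-Real.log t) ≤ ε / 4 := by
    have : δ * (4 * (-Real.log t + 1)) = ε := div_mul_cancel₀ _ (by positivity)
    nlinarith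
  obtain ⟨M, B, hB, hBn, hBδ⟩ := exists_tower hT hR hRT hTR hμT hn hδ0
  have hBm : ∀ j : Fin n, MeasurableSet (R^[j] ⁻¹' B) := fun j => (hμR.iterate j).measurable hB
  have hlt_disj : ∀ i j : Fin n, i < j → Disjoint (R^[i] ⁻¹' B) (R^[j] ⁻¹' B) := by
    intro i j hij
    refine Set.disjoint_left.2 fun x hx hy => hBn _ hy (j - i) ?_ ?_ ?_
    · have : (i : ℕ) < j := hij
      omega
    · omega
    · rw [iterate_inv_of_le hTR (Nat.sub_le _ _), Nat.sub_sub_self (show (i : ℕ) ≤ j from hij.le)]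
      exact hx
  have hd : Pairwise fun i j : Fin n => Disjoint (R^[i] ⁻¹' B) (R^[j] ⁻¹' B) := by
    intro i j hij
    rcases lt_or_gt_of_ne hij with h | h
    · exact hlt_disj i j h
    · exact (hlt_disj j i h).symm
  have hsum := cE_tower_sum (μ := μ) hm hb hBm hd
  have : Nonempty (Fin n) := ⟨⟨0, hn⟩⟩
  obtain ⟨j, -, hj⟩ := Finset.exists_le_of_sum_le (s := Finset.univ) Finset.univ_nonempty
    (f := fun j : Fin n => cE m μ (fun x => if x ∈ R^[j] ⁻¹' B then some (b x) else none))
    (g := fun _ => (n : ℝ)⁻¹ * (cE m μ b + Real.log (n + 1) + 1))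
    (by simpa [mul_inv_cancel_left₀ hn0.ne'] using hsum)
  -- the points missed by the visits to level `j` are the preimage under `R^[j]` of those missed by
  -- the tower
  have hE : (perSet T M)ᶜ ∩ {x | ∀ i < n, R^[i] x ∉ R^[j] ⁻¹' B} = R^[j] ⁻¹'
      {x | (∀ i, 1 ≤ i → i < M → T^[i] x ≠ x) ∧ ∀ i < n, R^[i] x ∉ B} := by
    ext x
    have e1 : R^[j] x ∈ (perSet T M)ᶜ ↔ x ∈ (perSet T M)ᶜ := by
      have := iterate_mem_perSet (M := M) hRT.injective j (x := R^[j] x)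
      rw [hTR.iterate] at this
      exact not_congr this.symm
    have e2 : ∀ y, (y ∈ (perSet T M)ᶜ ↔ ∀ i, 1 ≤ i → i < M → T^[i] y ≠ y) := by
      intro y; simp [perSet]
    rw [Set.mem_inter_iff, ← e1, e2]
    refine and_congr_right fun _ => forall₂_congr fun i _ => ?_
    rw [Set.mem_preimage, ← Function.iterate_add_apply, ← Function.iterate_add_apply, add_comm]
  set Q := {x | (∀ i, 1 ≤ i → i < M → T^[i] x ≠ x) ∧ ∀ i < n, R^[i] x ∉ B} with hQ
  have hQm : MeasurableSet (R^[j] ⁻¹' Q) := by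
    rw [← hE]
    refine (measurableSet_perSet hT M).compl.inter ?_
    have : {x | ∀ i < n, R^[i] x ∉ R^[j] ⁻¹' B}
        = ⋂ i ∈ Finset.range n, (R^[i] ⁻¹' (R^[j] ⁻¹' B))ᶜ := by
      ext x; simp
    rw [this]
    exact Finset.measurableSet_biInter _ fun i _ => ((hμR.iterate i).measurable (hBm j)).compl
  obtain ⟨α, hα, hmem, N, hN⟩ := exists_coding hm hT hRT hTR hμT hμR hTm hRm hn hb ha₀ hV hs
    (hBm j) hE.symm hQm (half_pos hε)
  refine ⟨α, hα, hmem, N, hN.trans ?_⟩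
  have hz := cE_option_le (μ := μ) hm (ha₀.ite_none hQm) ht0
  have hset : {x | (if x ∈ R^[j] ⁻¹' Q then some (a₀ x) else none) ≠ none} = R^[j] ⁻¹' Q := by
    ext x; by_cases hx : R^[j] x ∈ Q <;> simp [hx]
  have hQm' : MeasurableSet Q := by
    have e : Q = T^[j] ⁻¹' (R^[j] ⁻¹' Q) := by
      ext x; simp [hRT.iterate (j : ℕ) x]
    rw [e]; exact (hμT.iterate j).measurable hQm
  rw [hset, measureReal_def, (hμR.iterate j).measure_preimage hQm'.nullMeasurableSet,
    ← measureReal_def] at hz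
  have : μ.real Q * (-Real.log t) ≤ δ * (-Real.log t) := mul_le_mul_of_nonneg_right hBδ hlt
  linarith

/-- The logarithmic error disappears upon applying `exists_label_le_log` to long concatenations
of words of length `n`. -/
lemma exists_label_le {L κ : Type*} [Fintype L] [Fintype κ] (hm : m ≤ mX) {T R : X → X}
    (hT : Continuous T) (hR : Continuous R)
    (hRT : Function.LeftInverse R T) (hTR : Function.LeftInverse T R)
    (hμT : MeasurePreserving T μ μ) (hμR : MeasurePreserving R μ μ)
    (hTm : m.comap T = m) (hRm : m.comap R = m) {n : ℕ} (hn : 1 ≤ n)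
    {b : X → L} (hb : Lab b) {a₀ : X → κ} (ha₀ : Lab a₀) {V : κ → Set X} {s : L → ℕ → κ}
    (hV : ∀ x, x ∈ V (a₀ x)) (hs : ∀ x, ∀ i < n, T^[i] x ∈ V (s (b x) i))
    {ε : ℝ} (hε : 0 < ε) :
    ∃ α : X → κ, Lab α ∧ (∀ x, x ∈ V (α x)) ∧ ∃ N : ℕ,
      ((N : ℝ) + 1)⁻¹ * cE m μ (fun x (j : Fin (N + 1)) => α (T^[j] x))
        ≤ (n : ℝ)⁻¹ * cE m μ b + ε := by
  have hn0 : (0 : ℝ) < n := by exact_mod_cast hn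
  have hlim : Tendsto (fun k : ℕ => (Real.log k + 2) / (k : ℝ)) atTop (𝓝 0) := by
    have h1 : Tendsto (fun x : ℝ => Real.log x / x) atTop (𝓝 0) :=
      Real.isLittleO_log_id_atTop.tendsto_div_nhds_zero
    have h2 : Tendsto (fun k : ℕ => Real.log k / (k : ℝ)) atTop (𝓝 0) :=
      h1.comp tendsto_natCast_atTop_atTop
    have h3 := h2.add (tendsto_const_div_atTop_nhds_zero_nat (2 : ℝ))
    simpa [add_div] using h3
  obtain ⟨k₀, hk₀⟩ := Filter.eventually_atTop.1 (hlim.eventually (gt_mem_nhds (half_pos hε)))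
  set k := k₀ + 1 with hk
  have hk0 : (0 : ℝ) < k := by positivity
  have hkn : k₀ ≤ k * n := by nlinarith
  have hkn1 : 1 ≤ k * n := Nat.mul_pos (Nat.succ_pos _) hn
  have hlog := hk₀ _ hkn
  have hiter : ∀ j : ℕ, MeasurePreserving (T^[n])^[j] μ μ := fun j => (hμT.iterate n).iterate j
  have hTmn : ∀ i : ℕ, m.comap T^[i] = m := by
    intro i
    induction i with
    | zero => exact MeasurableSpace.comap_id
    | succ i ih => rw [Function.iterate_succ, ← MeasurableSpace.comap_comp, ih, hTm]
  have hb' : Lab fun x (j : Fin k) => b ((T^[n])^[j] x) :=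
    Lab.pi fun j : Fin k => hb.comp_meas (hiter j).measurable
  obtain ⟨α, hα, hmem, N, hN⟩ := exists_label_le_log hm hT hR hRT hTR hμT hμR hTm hRm hkn1 hb' ha₀
    (V := V) (s := fun w i =>
      if h : i / n < k then s (w ⟨i / n, h⟩) (i % n) else s (w ⟨0, by omega⟩) 0)
    hV (by
      intro x i hi
      have h : i / n < k := Nat.div_lt_of_lt_mul (by rwa [mul_comm] at hi)
      simp only [h, dif_pos]
      have := hs ((T^[n])^[i / n] x) (i % n) (Nat.mod_lt _ hn)
      rw [← Function.iterate_mul] at this ⊢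
      rwa [← Function.iterate_add_apply, Nat.mod_add_div] at this)
    (half_pos hε)
  refine ⟨α, hα, hmem, N, hN.trans ?_⟩
  have h1 := cE_name_le hm (hμT.iterate n) (hTmn n) hb k
  have hlog' : Real.log ((k * n : ℕ) + 1) + 1 ≤ Real.log (k * n : ℕ) + 2 := by
    have h1' : (1 : ℝ) ≤ (k * n : ℕ) := by exact_mod_cast hkn1
    have h2' : Real.log ((k * n : ℕ) + 1) ≤ Real.log (2 * (k * n : ℕ)) :=
      Real.log_le_log (by positivity) (by linarith)
    rw [Real.log_mul two_ne_zero (by positivity)] at h2'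
    have := Real.log_two_lt_d9
    linarith
  have hpos : (0 : ℝ) < (k * n : ℕ) := by exact_mod_cast hkn1
  rw [div_lt_iff₀ hpos] at hlog
  have key : cE m μ (fun x (j : Fin k) => b ((T^[n])^[j] x)) + Real.log ((k * n : ℕ) + 1) + 1
      ≤ (k * n : ℕ) * ((n : ℝ)⁻¹ * cE m μ b + ε / 2) := by
    have : ((k * n : ℕ) : ℝ) * ((n : ℝ)⁻¹ * cE m μ b) = k * cE m μ b := by
      push_cast; field_simp
    rw [mul_add, this]
    linarith
  have := (inv_mul_le_iff₀ hpos).2 key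
  linarith

end Coding


/-! ### Comparison of the two local entropies -/

lemma condEntPartition_nonneg {m : MeasurableSpace X} [mX : MeasurableSpace X]
    [StandardBorelSpace X] {μ : Measure X} [IsProbabilityMeasure μ] (hm : m ≤ mX)
    {α : Finset (Set X)} (hα : IsPartition α) : 0 ≤ condEntPartition μ m α := by
  obtain ⟨f, hf, hfα, -⟩ := exists_parts_eq hα
  rw [← hfα, condEntPartition_parts hm hf]
  exact cE_nonneg f

section Comparison

variable [MeasurableSpace X]

lemma isPartition_dynCover {T : X → X} (hT : Measurable T) {α : Finset (Set X)}
    (hα : IsPartition α) (n : ℕ) : IsPartition (dynCover T α n) := by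
  obtain ⟨f, hf, hfα, -⟩ := exists_parts_eq hα
  rw [← hfα, dynCover_parts]
  exact isPartition_parts (Lab.pi fun j : Fin n => hf.comp_meas (hT.iterate j))

lemma exists_partition_refines {U : Finset (Set X)} (hU : IsBorelCover U) :
    ∃ α, IsPartition α ∧ Refines α U := by
  obtain ⟨a, ha, hmem⟩ := exists_selection hU
  refine ⟨parts a, isPartition_parts ha, fun v hv => ?_⟩
  obtain ⟨u, -, rfl⟩ := Finset.mem_image.1 hv
  refine ⟨u, u.2, fun x hx => ?_⟩
  have : a x = u := hx
  exact this ▸ hmem x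

lemma isBorelCover_dynCover {T : X → X} (hT : Measurable T) {U : Finset (Set X)}
    (hU : IsBorelCover U) (n : ℕ) : IsBorelCover (dynCover T U n) := by
  refine ⟨fun A hA => ?_, Set.eq_univ_of_forall fun x => ?_⟩
  · obtain ⟨w, hw, rfl⟩ := mem_dynCover.1 hA
    have : {x | ∀ i < n, T^[i] x ∈ w i} = ⋂ i ∈ Finset.range n, T^[i] ⁻¹' w i := by
      ext x; simp
    rw [this]
    refine Finset.measurableSet_biInter _ fun i hi => hT.iterate i (hU.1 _ (hw i ?_))
    exact Finset.mem_range.1 hi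
  · have h : ∀ y, ∃ u ∈ U, y ∈ u := fun y => by
      obtain ⟨u, hu, hy⟩ := (hU.2 ▸ Set.mem_univ y : y ∈ ⋃₀ (U : Set (Set X)))
      exact ⟨u, hu, hy⟩
    choose u hu hmem using h
    exact ⟨{y | ∀ i < n, T^[i] y ∈ u (T^[i] x)},
      mem_dynCover.2 ⟨fun i => u (T^[i] x), fun i _ => hu _, rfl⟩, fun i _ => hmem _⟩

variable [StandardBorelSpace X] [MeasurableSpace Y]
  {μ : Measure X} [IsProbabilityMeasure μ]

lemma bddBelow_HCond {π : X → Y} (hπ : Measurable π) (U : Finset (Set X)) :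
    BddBelow {r : ℝ | ∃ α : Finset (Set X), IsPartition α ∧ Refines α U ∧
      r = condEntPartition μ (MeasurableSpace.comap π inferInstance) α} := by
  refine ⟨0, ?_⟩
  rintro r ⟨α, hα, -, rfl⟩
  exact condEntPartition_nonneg hπ.comap_le hα

lemma HCond_nonneg {π : X → Y} (hπ : Measurable π) (U : Finset (Set X)) : 0 ≤ HCond μ π U := by
  refine Real.sInf_nonneg ?_
  rintro r ⟨α, hα, -, rfl⟩
  exact condEntPartition_nonneg hπ.comap_le hα

lemma bddBelow_hPart {T : X → X} (hT : Measurable T) {π : X → Y} (hπ : Measurable π)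
    {α : Finset (Set X)} (hα : IsPartition α) :
    BddBelow (Set.range fun n : ℕ => ((n : ℝ) + 1)⁻¹ *
      condEntPartition μ (MeasurableSpace.comap π inferInstance) (dynCover T α (n + 1))) := by
  refine ⟨0, ?_⟩
  rintro _ ⟨n, rfl⟩
  exact mul_nonneg (by positivity)
    (condEntPartition_nonneg hπ.comap_le (isPartition_dynCover hT hα _))

lemma hPart_nonneg {T : X → X} (hT : Measurable T) {π : X → Y} (hπ : Measurable π)
    {α : Finset (Set X)} (hα : IsPartition α) : 0 ≤ hPart T μ π α :=
  Real.iInf_nonneg fun _ => mul_nonneg (by positivity)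
    (condEntPartition_nonneg hπ.comap_le (isPartition_dynCover hT hα _))

lemma hCond_le_hPlus {T : X → X} (hT : Measurable T) {π : X → Y} (hπ : Measurable π)
    {U : Finset (Set X)} (hU : IsBorelCover U) : hCond T μ π U ≤ hPlus T μ π U := by
  obtain ⟨α₀, hα₀, hα₀U⟩ := exists_partition_refines hU
  refine le_csInf ⟨_, α₀, hα₀, hα₀U, rfl⟩ ?_
  rintro r ⟨α, hα, hαU, rfl⟩
  refine ciInf_mono ⟨0, ?_⟩ fun n => ?_
  · rintro _ ⟨n, rfl⟩
    exact mul_nonneg (by positivity) (HCond_nonneg hπ _)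
  · exact mul_le_mul_of_nonneg_left (csInf_le (bddBelow_HCond hπ _)
      ⟨_, isPartition_dynCover hT hα _, refines_dynCover T hαU _, rfl⟩) (by positivity)

/-- A nearly optimal partition refining `dynCover T U (n + 1)` prescribes members of `U` along orbit
segments of length `n + 1`, so that `exists_label_le` applies to it. -/
lemma hPlus_le_hCond [TopologicalSpace X] [T2Space X] [SecondCountableTopology X] [BorelSpace X]
    {T R : X → X} (hT : Continuous T) (hR : Continuous R)
    (hRT : Function.LeftInverse R T) (hTR : Function.LeftInverse T R)
    (hμT : MeasurePreserving T μ μ) (hμR : MeasurePreserving R μ μ)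
    {π : X → Y} (hπ : Measurable π)
    (hTm : (MeasurableSpace.comap π inferInstance).comap T = MeasurableSpace.comap π inferInstance)
    (hRm : (MeasurableSpace.comap π inferInstance).comap R = MeasurableSpace.comap π inferInstance)
    {U : Finset (Set X)} (hU : IsBorelCover U) : hPlus T μ π U ≤ hCond T μ π U := by
  refine le_ciInf fun n => le_of_forall_pos_le_add fun ε hε => ?_
  have hn : (0 : ℝ) < n + 1 := by positivity
  obtain ⟨β₀, hβ₀, hβ₀U⟩ := exists_partition_refines (isBorelCover_dynCover hT.measurable hU (n + 1))
  obtain ⟨r, ⟨β, hβ, hβU, rfl⟩, hr⟩ := exists_lt_of_csInf_lt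
    (s := {r : ℝ | ∃ α : Finset (Set X), IsPartition α ∧ Refines α (dynCover T U (n + 1)) ∧
      r = condEntPartition μ (MeasurableSpace.comap π inferInstance) α})
    ⟨_, β₀, hβ₀, hβ₀U, rfl⟩ (lt_add_of_pos_right _ (half_pos hε))
  change _ < HCond μ π (dynCover T U (n + 1)) + ε / 2 at hr
  obtain ⟨b, hb, hbβ, hbmem⟩ := exists_parts_eq hβ
  obtain ⟨a₀, ha₀, hV⟩ := exists_selection hU
  obtain ⟨x₀⟩ : Nonempty X := μ.nonempty_of_neZero
  have h1 : ∀ A : ↥β, ∃ w : ℕ → ↥U, ∀ x ∈ (A : Set X), ∀ i < n + 1, T^[i] x ∈ (w i : Set X) := by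
    intro A
    obtain ⟨v, hv, hAv⟩ := hβU A A.2
    obtain ⟨w, hw, rfl⟩ := mem_dynCover.1 hv
    refine ⟨fun i => if h : i < n + 1 then ⟨w i, hw i h⟩ else a₀ x₀, fun x hx i hi => ?_⟩
    simpa [hi] using hAv hx i hi
  choose s hs using h1
  obtain ⟨α, hα, hmem, N, hN⟩ := exists_label_le hπ.comap_le hT hR hRT hTR hμT hμR hTm hRm
    (Nat.succ_pos n) hb ha₀ (V := fun u : ↥U => (u : Set X)) (s := s) hV
    (fun x i hi => hs _ x (hbmem x) i hi) (half_pos hε)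
  have hp := isPartition_parts hα
  have hpU : Refines (parts α) U := by
    intro v hv
    obtain ⟨u, -, rfl⟩ := Finset.mem_image.1 hv
    refine ⟨u, u.2, fun x hx => ?_⟩
    have : α x = u := hx
    exact this ▸ hmem x
  have h2 : hPlus T μ π U ≤ hPart T μ π (parts α) := by
    refine csInf_le ⟨0, ?_⟩ ⟨_, hp, hpU, rfl⟩
    rintro r ⟨α, hα, -, rfl⟩
    exact hPart_nonneg hT.measurable hπ hα
  have h3 := ciInf_le (bddBelow_hPart (μ := μ) hT.measurable hπ hp) N
  rw [dynCover_parts, condEntPartition_parts hπ.comap_le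
    (Lab.pi fun j : Fin (N + 1) => hα.comp_meas (hT.measurable.iterate j))] at h3
  rw [← hbβ, condEntPartition_parts hπ.comap_le hb] at hr
  have h4 : ((n + 1 : ℕ) : ℝ)⁻¹ * cE (MeasurableSpace.comap π inferInstance) μ b
      ≤ ((n : ℝ) + 1)⁻¹ * HCond μ π (dynCover T U (n + 1)) + ε / 2 := by
    push_cast
    have h5 : ((n : ℝ) + 1)⁻¹ ≤ 1 :=
      inv_le_one_of_one_le₀ (by linarith [Nat.cast_nonneg (α := ℝ) n])
    have h6 := mul_le_mul_of_nonneg_left hr.le (inv_nonneg.2 hn.le)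
    nlinarith
  have h7 : hPart T μ π (parts α) ≤ _ := h3
  linarith

end Comparison

variable [MetricSpace X] [CompactSpace X] [MeasurableSpace X] [BorelSpace X]
variable [MetricSpace Y] [CompactSpace Y] [MeasurableSpace Y] [BorelSpace Y]

/-- for invertible systems, `h_μ^+(T,U|Y) = h_μ(T,U|Y)`. -/
theorem statement5
    (T : X → X) (S : Y → Y) (π : X → Y)
    (hT : Continuous T) (hTsurj : Function.Surjective T)
    (hS : Continuous S) (hSsurj : Function.Surjective S)
    (hπ : Continuous π) (hπsurj : Function.Surjective π)
    (hfac : π ∘ T = S ∘ π)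
    (hTinv : IsHomeomorph T) (hSinv : IsHomeomorph S)
    (U : Finset (Set X)) (hU : IsOpenCover U)
    (μ : Measure X) (hμp : IsProbabilityMeasure μ) (hμ : Measure.map T μ = μ) :
    hPlus T μ π U = hCond T μ π U := by
  obtain ⟨R, hRc, hRT, hTR⟩ : ∃ R : X → X, Continuous R ∧ Function.LeftInverse R T ∧
      Function.LeftInverse T R :=
    ⟨(hTinv.homeomorph T).symm, (hTinv.homeomorph T).symm.continuous,
      (hTinv.homeomorph T).symm_apply_apply, (hTinv.homeomorph T).apply_symm_apply⟩
  have hU' : IsBorelCover U := ⟨fun A hA => (hU.1 A hA).measurableSet, hU.2⟩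
  have hμT : MeasurePreserving T μ μ := ⟨hT.measurable, hμ⟩
  have hμR : MeasurePreserving R μ μ := by
    refine ⟨hRc.measurable, ?_⟩
    conv_lhs => rw [← hμ]
    rw [Measure.map_map hRc.measurable hT.measurable, hRT.comp_eq_id, Measure.map_id]
  -- `π⁻¹ B(Y)` is exactly `T`-invariant because `S` is a homeomorphism
  have hTm : (MeasurableSpace.comap π inferInstance).comap T =
      MeasurableSpace.comap π inferInstance := by
    have hSm : MeasurableSpace.comap S inferInstance = (inferInstance : MeasurableSpace Y) :=
      (hSinv.homeomorph S).measurableEmbedding.comap_eq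
    rw [MeasurableSpace.comap_comp, hfac, ← MeasurableSpace.comap_comp, hSm]
  have hRm : (MeasurableSpace.comap π inferInstance).comap R =
      MeasurableSpace.comap π inferInstance := by
    conv_lhs => rw [← hTm]
    rw [MeasurableSpace.comap_comp, hTR.comp_eq_id, MeasurableSpace.comap_id]
  exact le_antisymm (hPlus_le_hCond hT hRc hRT hTR hμT hμR hπ.measurable hTm hRm hU')
    (hCond_le_hPlus hT.measurable hπ.measurable hU')

end RelLocVP

end
end

section
/- Let π : (X,T) → (Y,S) be a factor map between topological dynamical systems, F = {f_n} ∈ S_X a subadditive sequence, and U = {U_1,…,U_d} a finite open cover of X. Then for every n ≥ 1 the map y ↦ P_n(T,F,U,y) from Y to ℝ is universally measurable, and (1/n) log P_n(T,F,U,y) ≤ ‖f_1‖_∞ + log d for all n ≥ 1 and all y ∈ Y. -/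
/-!
The map `y ↦ P_n(T,F,U,y)` is in fact upper semicontinuous, hence Borel.  Write `W` for the open
cover `U_0^{n-1}` and `g` for `exp ∘ f_n`.  Grouping the members of a cover `V ⪰ W` by a member
of `W` containing them, and noting that a piece of `w ∈ W` on which `g` has supremum below `t w`
may be enlarged on the fibre to `w ∩ {g < t w}` without pushing its supremum above `t w`, one
sees that `P_n(y) < a` holds exactly when there are thresholds `t : W → [0, ∞)` with
`∑ t w < a` such that the open set `⋃ w, w ∩ {g < t w}` contains the whole fibre `π⁻¹(y)`.
Since `π` is a closed map (`X` is compact), the set of such `y` is open for each `t`, so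
`{P_n < a}` is open.

For the bound, take `V = U_0^{n-1}`: it has at most `d ^ n` members, and `f_n ≤ n ‖f_1‖` by
subadditivity.
-/

open MeasureTheory Filter Topology Set
open scoped Classical

noncomputable section

namespace RelLocVP

variable {X Y Z : Type*}

variable [MetricSpace X] [CompactSpace X] [MeasurableSpace X] [BorelSpace X]
variable [MetricSpace Y] [CompactSpace Y] [MeasurableSpace Y] [BorelSpace Y]

theorem IsOpenCover.isBorelCover {W : Finset (Set X)} (hW : IsOpenCover W) : IsBorelCover W :=
  ⟨fun A hA => (hW.1 A hA).measurableSet, hW.2⟩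

theorem IsOpenCover.exists_mem {W : Finset (Set X)} (hW : IsOpenCover W) (x : X) :
    ∃ w ∈ W, x ∈ w := by
  have h : x ∈ ⋃₀ (W : Set (Set X)) := hW.2 ▸ mem_univ x
  obtain ⟨w, hw, hx⟩ := h
  exact ⟨w, hw, hx⟩

theorem isOpenCover_dynCover {T : X → X} (hT : Continuous T) {U : Finset (Set X)}
    (hU : IsOpenCover U) (n : ℕ) : IsOpenCover (dynCover T U n) := by
  induction n with
  | zero => simp [IsOpenCover, dynCover]
  | succ n ih =>
    refine ⟨fun A hA => ?_, eq_univ_of_forall fun x => ?_⟩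
    · obtain ⟨v, hv, w, hw, rfl⟩ := Finset.mem_image₂.1 hA
      obtain ⟨u, hu, rfl⟩ := Finset.mem_image.1 hw
      exact (ih.1 v hv).inter ((hU.1 u hu).preimage (hT.iterate n))
    · obtain ⟨v, hv, hxv⟩ := ih.exists_mem x
      obtain ⟨u, hu, hxu⟩ := hU.exists_mem (T^[n] x)
      exact ⟨v ∩ T^[n] ⁻¹' u, Finset.mem_coe.2
        (Finset.mem_image₂_of_mem hv (Finset.mem_image_of_mem _ hu)), hxv, hxu⟩

theorem card_dynCover_le {X : Type*} (T : X → X) (U : Finset (Set X)) (n : ℕ) :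
    (dynCover T U n).card ≤ U.card ^ n := by
  induction n with
  | zero => simp [dynCover]
  | succ n ih =>
    rw [pow_succ]
    exact (Finset.card_image₂_le _ _ _).trans (Nat.mul_le_mul ih Finset.card_image_le)

theorem abs_le_supNorm {g : X → ℝ} (hg : Continuous g) (x : X) : |g x| ≤ supNorm g :=
  le_ciSup (isCompact_range hg.abs).bddAbove x

theorem supNorm_nonneg {X : Type*} (g : X → ℝ) : 0 ≤ supNorm g :=
  Real.iSup_nonneg fun x => abs_nonneg (g x)

theorem IsSubadditiveSeq.le_mul_supNorm {T : X → X} {f : ℕ → X → ℝ} (hf : IsSubadditiveSeq T f)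
    {n : ℕ} (hn : 1 ≤ n) (x : X) : f n x ≤ n * supNorm (f 1) := by
  have h1 : ∀ x, f 1 x ≤ supNorm (f 1) := fun x =>
    (le_abs_self _).trans (abs_le_supNorm (hf.1 1 le_rfl) x)
  induction n, hn using Nat.le_induction with
  | base => simpa using h1 x
  | succ n hn ih =>
    have := hf.2 n 1 hn le_rfl x
    have := h1 (T^[n] x)
    push_cast
    linarith

theorem sSup_exp_nonneg {X : Type*} (g : X → ℝ) (s : Set X) :
    0 ≤ sSup ((fun x => Real.exp (g x)) '' s) :=
  Real.sSup_nonneg (by rintro _ ⟨x, -, rfl⟩; exact (Real.exp_pos _).le)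

/-- The sums whose infimum is `PnFiber` are nonnegative. -/
theorem zero_mem_lowerBounds_PnFiber (T : X → X) (π : X → Y) (f : ℕ → X → ℝ)
    (U : Finset (Set X)) (n : ℕ) (y : Y) :
    0 ∈ lowerBounds { r : ℝ | ∃ V : Finset (Set X), IsBorelCover V ∧
      Refines V (dynCover T U n) ∧
      r = ∑ v ∈ V, sSup ((fun x => Real.exp (f n x)) '' (v ∩ π ⁻¹' {y})) } := by
  rintro r ⟨V, -, -, rfl⟩
  exact Finset.sum_nonneg fun v _ => sSup_exp_nonneg _ _

theorem PnFiber_le {T : X → X} (π : X → Y) {f : ℕ → X → ℝ} {U : Finset (Set X)} {n : ℕ} (y : Y)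
    {V : Finset (Set X)} (hV : IsBorelCover V) (hVU : Refines V (dynCover T U n)) :
    PnFiber T π f U n y ≤ ∑ v ∈ V, sSup ((fun x => Real.exp (f n x)) '' (v ∩ π ⁻¹' {y})) :=
  csInf_le ⟨0, zero_mem_lowerBounds_PnFiber T π f U n y⟩ ⟨V, hV, hVU, rfl⟩

/-- Thresholds whose sublevel pieces `w ∩ {exp ∘ f n < t w}` cover the fibre bound `PnFiber`
from above by their total. -/
theorem PnFiber_le_sum_of_fiber_subset {T : X → X} (hT : Continuous T) {π : X → Y}
    (hπ : Continuous π) {f : ℕ → X → ℝ} {U : Finset (Set X)} (hU : IsOpenCover U) {n : ℕ}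
    (hf : Continuous (f n)) {t : Set X → ℝ} (ht : ∀ w, 0 ≤ t w) {y : Y}
    (hy : π ⁻¹' {y} ⊆ ⋃ w ∈ dynCover T U n, w ∩ {x | Real.exp (f n x) < t w}) :
    PnFiber T π f U n y ≤ ∑ w ∈ dynCover T U n, t w := by
  have hW := isOpenCover_dynCover hT hU n
  -- Off the fibre the pieces are all of `w`: this makes them cover `X` at no cost.
  let p : Set X → Set X := fun w => w ∩ ({x | Real.exp (f n x) < t w} ∪ (π ⁻¹' {y})ᶜ)
  have hV : IsBorelCover ((dynCover T U n).image p) := by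
    refine ⟨fun A hA => ?_, eq_univ_of_forall fun x => ?_⟩
    · obtain ⟨w, hw, rfl⟩ := Finset.mem_image.1 hA
      exact (hW.1 w hw).measurableSet.inter
        ((isOpen_lt (Real.continuous_exp.comp hf) continuous_const).measurableSet.union
          (isClosed_singleton.preimage hπ).measurableSet.compl)
    · by_cases hx : x ∈ π ⁻¹' {y}
      · obtain ⟨w, hw, hxw, hxt⟩ := mem_iUnion₂.1 (hy hx)
        exact ⟨p w, Finset.mem_coe.2 (Finset.mem_image_of_mem p hw), hxw, Or.inl hxt⟩
      · obtain ⟨w, hw, hxw⟩ := hW.exists_mem x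
        exact ⟨p w, Finset.mem_coe.2 (Finset.mem_image_of_mem p hw), hxw, Or.inr hx⟩
  have hVU : Refines ((dynCover T U n).image p) (dynCover T U n) := by
    intro v hv
    obtain ⟨w, hw, rfl⟩ := Finset.mem_image.1 hv
    exact ⟨w, hw, inter_subset_left⟩
  refine (PnFiber_le π y hV hVU).trans ((Finset.sum_image_le_of_nonneg fun v _ =>
    sSup_exp_nonneg _ _).trans (Finset.sum_le_sum fun w _ => ?_))
  refine Real.sSup_le ?_ (ht w)
  rintro _ ⟨x, ⟨⟨-, hx | hx⟩, hxy⟩, rfl⟩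
  · exact le_of_lt hx
  · exact absurd hxy hx

/-- A bound `PnFiber < a` is witnessed by thresholds of total less than `a`: give `w` the sum of
the suprema over the cover members assigned to `w`, plus a small `ε`. -/
theorem exists_thresholds {T : X → X} (hT : Continuous T) {π : X → Y} {f : ℕ → X → ℝ}
    {U : Finset (Set X)} (hU : IsOpenCover U) {n : ℕ} (hf : Continuous (f n)) {y : Y} {a : ℝ}
    (ha : PnFiber T π f U n y < a) :
    ∃ t : Set X → ℝ, (∀ w, 0 ≤ t w) ∧ ∑ w ∈ dynCover T U n, t w < a ∧
      π ⁻¹' {y} ⊆ ⋃ w ∈ dynCover T U n, w ∩ {x | Real.exp (f n x) < t w} := by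
  have hne : { r : ℝ | ∃ V : Finset (Set X), IsBorelCover V ∧ Refines V (dynCover T U n) ∧
      r = ∑ v ∈ V, sSup ((fun x => Real.exp (f n x)) '' (v ∩ π ⁻¹' {y})) }.Nonempty :=
    ⟨_, dynCover T U n, (isOpenCover_dynCover hT hU n).isBorelCover,
      fun v hv => ⟨v, hv, subset_rfl⟩, rfl⟩
  obtain ⟨r, ⟨V, hV, hVU, rfl⟩, hr⟩ := exists_lt_of_csInf_lt hne ha
  choose! φ hφ hsub using hVU
  set s : Set X → ℝ := fun v => sSup ((fun x => Real.exp (f n x)) '' (v ∩ π ⁻¹' {y})) with hs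
  have hs0 : ∀ v, 0 ≤ s v := fun v => sSup_exp_nonneg _ _
  obtain ⟨ε, hε, hεa⟩ : ∃ ε : ℝ, 0 < ε ∧ (dynCover T U n).card * ε < a - ∑ v ∈ V, s v := by
    refine ⟨(a - ∑ v ∈ V, s v) / ((dynCover T U n).card + 1),
      div_pos (sub_pos.2 hr) (by positivity), ?_⟩
    rw [← mul_div_assoc, div_lt_iff₀ (by positivity)]
    linarith [sub_pos.2 hr]
  refine ⟨fun w => (∑ v ∈ V with φ v = w, s v) + ε,
    fun w => add_nonneg (Finset.sum_nonneg fun v _ => hs0 v) hε.le, ?_, fun x hx => ?_⟩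
  · rw [Finset.sum_add_distrib, Finset.sum_fiberwise_of_maps_to hφ, Finset.sum_const,
      nsmul_eq_mul]
    linarith
  · have hxV : x ∈ ⋃₀ (V : Set (Set X)) := hV.2 ▸ mem_univ x
    obtain ⟨v, hv, hxv⟩ := hxV
    refine mem_iUnion₂.2 ⟨φ v, hφ v hv, hsub v hv hxv, ?_⟩
    have hbdd : BddAbove ((fun x => Real.exp (f n x)) '' (v ∩ π ⁻¹' {y})) :=
      (isCompact_range (Real.continuous_exp.comp hf)).bddAbove.mono (image_subset_range _ _)
    have h1 : Real.exp (f n x) ≤ s v := le_csSup hbdd ⟨x, ⟨hxv, hx⟩, rfl⟩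
    have h2 : s v ≤ ∑ v' ∈ V with φ v' = φ v, s v' :=
      Finset.single_le_sum (fun v' _ => hs0 v') (Finset.mem_filter.2 ⟨hv, rfl⟩)
    exact (h1.trans h2).trans_lt (lt_add_of_pos_right _ hε)

/-- The sets `{PnFiber < a}` are open; that is, `PnFiber` is upper semicontinuous in `y`. -/
theorem isOpen_PnFiber_lt {T : X → X} (hT : Continuous T) {π : X → Y}
    (hπ : Continuous π) {f : ℕ → X → ℝ} {U : Finset (Set X)} (hU : IsOpenCover U) {n : ℕ}
    (hf : Continuous (f n)) (a : ℝ) : IsOpen {y | PnFiber T π f U n y < a} := by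
  refine isOpen_iff_forall_mem_open.2 fun y hy => ?_
  obtain ⟨t, ht, hta, hyt⟩ := exists_thresholds hT hU hf hy
  have hO : IsOpen (⋃ w ∈ dynCover T U n, w ∩ {x | Real.exp (f n x) < t w}) :=
    isOpen_biUnion fun w hw => ((isOpenCover_dynCover hT hU n).1 w hw).inter
      (isOpen_lt (Real.continuous_exp.comp hf) continuous_const)
  refine ⟨(π '' (⋃ w ∈ dynCover T U n, w ∩ {x | Real.exp (f n x) < t w})ᶜ)ᶜ, fun z hz => ?_,
    (hπ.isClosedMap _ hO.isClosed_compl).isOpen_compl, ?_⟩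
  · refine (PnFiber_le_sum_of_fiber_subset hT hπ hU hf ht fun x hx => ?_).trans_lt hta
    by_contra hxO
    exact hz ⟨x, hxO, hx⟩
  · rintro ⟨x, hxO, hxy⟩
    exact hxO (hyt hxy)

/-- `y ↦ P_n(T,F,U,y)` is universally measurable (here: a.e.-measurable with
respect to every finite Borel measure on `Y`), and `(1/n) log P_n(T,F,U,y) ≤ ‖f_1‖ + log d`
where `d` is the number of elements of the cover `U`. -/
theorem statement6
    (T : X → X) (S : Y → Y) (π : X → Y)
    (hT : Continuous T) (hTsurj : Function.Surjective T)
    (hS : Continuous S) (hSsurj : Function.Surjective S)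
    (hπ : Continuous π) (hπsurj : Function.Surjective π)
    (hfac : π ∘ T = S ∘ π)
    (f : ℕ → X → ℝ) (hf : IsSubadditiveSeq T f)
    (U : Finset (Set X)) (hU : IsOpenCover U) :
    (∀ n : ℕ, 1 ≤ n → ∀ ν : Measure Y, IsFiniteMeasure ν →
      AEMeasurable (fun y => PnFiber T π f U n y) ν) ∧
    (∀ n : ℕ, 1 ≤ n → ∀ y : Y,
      (n : ℝ)⁻¹ * Real.log (PnFiber T π f U n y) ≤ supNorm (f 1) + Real.log (U.card)) := by
  refine ⟨fun n hn ν _ => (measurable_of_Iio fun a =>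
    (isOpen_PnFiber_lt hT hπ hU (hf.1 n hn) a).measurableSet).aemeasurable, fun n hn y => ?_⟩
  have hn0 : (0 : ℝ) < n := by exact_mod_cast hn
  have hP0 : 0 ≤ PnFiber T π f U n y :=
    Real.sInf_nonneg fun r hr => zero_mem_lowerBounds_PnFiber T π f U n y hr
  have hM := supNorm_nonneg (f 1)
  rcases hP0.eq_or_lt with hP | hP
  -- `Real.log 0 = 0`, and the right-hand side is nonnegative.
  · rw [← hP, Real.log_zero, mul_zero]
    exact add_nonneg hM (Real.log_natCast_nonneg _)
  have hle : PnFiber T π f U n y ≤ (U.card : ℝ) ^ n * Real.exp (n * supNorm (f 1)) := by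
    calc PnFiber T π f U n y
        ≤ ∑ v ∈ dynCover T U n, sSup ((fun x => Real.exp (f n x)) '' (v ∩ π ⁻¹' {y})) :=
          PnFiber_le π y (isOpenCover_dynCover hT hU n).isBorelCover
            fun v hv => ⟨v, hv, subset_rfl⟩
      _ ≤ ∑ _v ∈ dynCover T U n, Real.exp (n * supNorm (f 1)) := by
          refine Finset.sum_le_sum fun v _ => Real.sSup_le ?_ (Real.exp_pos _).le
          rintro _ ⟨x, -, rfl⟩
          exact Real.exp_le_exp.2 (hf.le_mul_supNorm hn x)
      _ = (dynCover T U n).card * Real.exp (n * supNorm (f 1)) := by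
          rw [Finset.sum_const, nsmul_eq_mul]
      _ ≤ (U.card : ℝ) ^ n * Real.exp (n * supNorm (f 1)) := by
          gcongr
          exact_mod_cast card_dynCover_le T U n
  have hd : (U.card : ℝ) ^ n ≠ 0 := by
    intro h
    rw [h, zero_mul] at hle
    exact absurd hP hle.not_gt
  have hlog := Real.log_le_log hP hle
  rw [Real.log_mul hd (Real.exp_ne_zero _), Real.log_exp, Real.log_pow] at hlog
  rw [inv_mul_le_iff₀ hn0]
  linarith

end RelLocVP

end
end

section
/- Let π : (X,T) → (Y,S) be a factor map between topological dynamical systems, F = {f_n} ∈ S_X a subadditive sequence, U a finite cover of X by Borel sets, and n ∈ ℕ. Then there exists a finite Borel partition η of X refining U_0^{n-1} such that for every y ∈ Y, Σ over the nonempty sets C ∩ π^{-1}(y) (C ∈ η) of sup_{x ∈ C ∩ π^{-1}(y)} exp(f_n(x)) is at most P_n(T,F,U,Y). -/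
/-!
Write `W` for the cover `U_0^{n-1}`, `g = exp ∘ f_n` and `M = P_n(T,F,U,Y)`. The proof has two
ingredients.

* On a single fibre, finitely many partitions suffice. An ordering `σ` of `W` yields a Borel
  partition `γ σ`, each member of `W` losing the points of the earlier ones. Given a cover `V`
  refining `W`, group its members according to a member of `W` containing them and order `W` by
  decreasing total supremum of the groups; the corresponding `γ σ` does at least as well as `V`
  on the fibre (`exists_perm_sum_le`). Hence for each `y` some `γ σ` has fibre sum at most `M`.

* The choice of `σ` can be made Borel in `y`. The set of `y` where the fibre sum of `γ σ`
  exceeds `M` need not be Borel, but it is analytic, because suprema over fibres have analytic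
  superlevel sets. By the first point these analytic sets, one for each `σ`, have empty
  intersection, so by Novikov's form of Lusin separation (`exists_partition_avoiding`) there is
  a Borel partition `D` of `Y` such that `γ σ` has fibre sum at most `M` above `D σ`.

The required partition consists of the sets `π⁻¹ (D σ) ∩ γ σ i`.
-/

open MeasureTheory Filter Topology Set
open scoped Classical

noncomputable section

namespace RelLocVP

variable {X Y Z : Type*}

/-! ### Covers and fibrewise suprema -/

lemma dynCover_isBorelCover [MeasurableSpace X] {T : X → X} (hT : Measurable T)
    {U : Finset (Set X)} (hU : IsBorelCover U) (n : ℕ) : IsBorelCover (dynCover T U n) := by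
  induction n with
  | zero => simp [dynCover, IsBorelCover]
  | succ n ih =>
    refine ⟨fun A hA => ?_, eq_univ_of_forall fun x => ?_⟩
    · simp only [dynCover, coverJoin, Finset.mem_image₂, Finset.mem_image] at hA
      obtain ⟨a, ha, _, ⟨u, hu, rfl⟩, rfl⟩ := hA
      exact (ih.1 a ha).inter ((hT.iterate n) (hU.1 u hu))
    · have h1 : x ∈ ⋃₀ (dynCover T U n : Set (Set X)) := ih.2 ▸ mem_univ x
      have h2 : T^[n] x ∈ ⋃₀ (U : Set (Set X)) := hU.2 ▸ mem_univ _
      obtain ⟨a, ha, hxa⟩ := h1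
      obtain ⟨u, hu, hxu⟩ := h2
      refine ⟨a ∩ T^[n] ⁻¹' u, ?_, hxa, hxu⟩
      simp only [dynCover, coverJoin, Finset.coe_image₂, Finset.coe_image]
      exact ⟨a, ha, _, ⟨u, hu, rfl⟩, rfl⟩

/-- The supremum of `g` over the part of `C` in the fibre of `π` above `y`, equal to `0` when
that part is empty. -/
def fiberSup (π : X → Y) (g : X → ℝ) (C : Set X) (y : Y) : ℝ :=
  sSup (g '' (C ∩ π ⁻¹' {y}))

lemma fiberSup_nonneg {π : X → Y} {g : X → ℝ} (hg : ∀ x, 0 ≤ g x) (C : Set X) (y : Y) :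
    0 ≤ fiberSup π g C y :=
  Real.sSup_nonneg (by rintro _ ⟨x, -, rfl⟩; exact hg x)

lemma fiberSup_le {π : X → Y} {g : X → ℝ} {C : Set X} {y : Y} {r : ℝ} (hr : 0 ≤ r)
    (h : ∀ x ∈ C, π x = y → g x ≤ r) : fiberSup π g C y ≤ r :=
  Real.sSup_le (by rintro _ ⟨x, hx, rfl⟩; exact h x hx.1 hx.2) hr

lemma le_fiberSup {π : X → Y} {g : X → ℝ} {K : ℝ} (hK : ∀ x, g x ≤ K) {C : Set X} {x : X}
    (hx : x ∈ C) : g x ≤ fiberSup π g C (π x) :=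
  le_csSup ⟨K, by rintro _ ⟨x, -, rfl⟩; exact hK x⟩ ⟨x, ⟨hx, rfl⟩, rfl⟩

/-! ### Optimality of the partitions induced by orderings of the cover -/

/-- Given a cover `V` finer than `w`, let `s i` be the total fibrewise supremum of the members of
`V` assigned to `w i`, and list the `w i` in order of decreasing `s`. A point of the `i`-th piece
of the disjointed list lies in a member of `V` assigned to position `i` or later, so that piece
has fibrewise supremum at most the `i`-th largest value of `s`. -/
lemma exists_perm_sum_le {π : X → Y} {g : X → ℝ} (hg : ∀ x, 0 ≤ g x) {K : ℝ}
    (hK : ∀ x, g x ≤ K) {k : ℕ} (w : Fin k → Set X) (V : Finset (Set X))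
    (hV : ⋃₀ (V : Set (Set X)) = univ) (hVw : ∀ v ∈ V, ∃ i, v ⊆ w i) (y : Y) :
    ∃ σ : Equiv.Perm (Fin k), ∑ i, fiberSup π g (disjointed (w ∘ σ) i) y
      ≤ ∑ v ∈ V, fiberSup π g v y := by
  have hVw' : ∀ v : V, ∃ i, v.1 ⊆ w i := fun v => hVw v.1 v.2
  choose u hu using hVw'
  let s : Fin k → ℝ := fun i => ∑ v : V with u v = i, fiberSup π g v.1 y
  have hs0 : ∀ i, 0 ≤ s i := fun i => Finset.sum_nonneg fun v _ => fiberSup_nonneg hg _ _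
  have hsum : ∑ i, s i = ∑ v ∈ V, fiberSup π g v y := by
    rw [← Finset.sum_coe_sort V]
    exact Finset.sum_fiberwise _ _ _
  let σ : Equiv.Perm (Fin k) := Tuple.sort fun i => - s i
  have hσ : Monotone ((fun i => - s i) ∘ σ) := Tuple.monotone_sort _
  refine ⟨σ, ?_⟩
  rw [← hsum, ← Equiv.sum_comp σ s]
  refine Finset.sum_le_sum fun i _ => fiberSup_le (hs0 _) ?_
  rintro x hx rfl
  have hxV : x ∈ ⋃₀ (V : Set (Set X)) := hV ▸ mem_univ x
  obtain ⟨v, hv, hxv⟩ := hxV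
  obtain ⟨j, hj⟩ : ∃ j, σ j = u ⟨v, hv⟩ := σ.surjective _
  have hij : i ≤ j := by
    by_contra hlt
    rw [disjointed_apply] at hx
    refine hx.2 ?_
    have hle : (w ∘ σ) j ≤ (Finset.Iio i).sup (w ∘ σ) :=
      Finset.le_sup (Finset.mem_Iio.2 (not_le.1 hlt))
    refine hle ?_
    show x ∈ w (σ j)
    rw [hj]
    exact hu ⟨v, hv⟩ hxv
  calc g x ≤ fiberSup π g v (π x) := le_fiberSup hK hxv
    _ ≤ s (σ j) := by
      refine Finset.single_le_sum (f := fun v : V => fiberSup π g v.1 (π x))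
        (fun v _ => fiberSup_nonneg hg _ _) (a := ⟨v, hv⟩) ?_
      simp [hj]
    _ ≤ s (σ i) := neg_le_neg_iff.1 (hσ hij)

/-! ### Analytic superlevel sets and separation -/

lemma analyticSet_inter [TopologicalSpace Y] [T2Space Y] {s t : Set Y}
    (hs : AnalyticSet s) (ht : AnalyticSet t) : AnalyticSet (s ∩ t) := by
  rw [inter_eq_iInter]
  exact AnalyticSet.iInter fun b => by cases b <;> assumption

/-- Superlevel sets of fibrewise suprema are projections of Borel sets, hence analytic; in
general they are not Borel. -/
lemma analyticSet_lt_fiberSup [TopologicalSpace X] [PolishSpace X] [MeasurableSpace X]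
    [BorelSpace X] [TopologicalSpace Y] [PolishSpace Y]
    {π : X → Y} (hπ : Continuous π) {g : X → ℝ} (hgm : Measurable g) (hg : ∀ x, 0 ≤ g x)
    {K : ℝ} (hK : ∀ x, g x ≤ K) {C : Set X} (hC : MeasurableSet C) (c : ℝ) :
    AnalyticSet {y | c < fiberSup π g C y} := by
  by_cases hc : c < 0
  · have : {y | c < fiberSup π g C y} = univ :=
      eq_univ_of_forall fun y => hc.trans_le (fiberSup_nonneg hg C y)
    rw [this]
    exact isClosed_univ.analyticSet
  · have : {y | c < fiberSup π g C y} = π '' (C ∩ {x | c < g x}) := by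
      ext y
      constructor
      · intro hy
        by_contra hno
        refine absurd hy (not_lt.2 (fiberSup_le (not_lt.1 hc) fun x hx hxy => ?_))
        by_contra hlt
        exact hno ⟨x, ⟨hx, not_le.1 hlt⟩, hxy⟩
      · rintro ⟨x, ⟨hx, hcx⟩, rfl⟩
        exact lt_of_lt_of_le hcx (le_fiberSup hK hx)
    rw [this]
    exact (hC.inter (measurableSet_lt measurable_const hgm)).analyticSet.image_of_continuous hπ

lemma analyticSet_lt_sum [TopologicalSpace Y] [PolishSpace Y] {ι : Type*} (s : Finset ι)
    {φ : ι → Y → ℝ} (h : ∀ i ∈ s, ∀ c, AnalyticSet {y | c < φ i y}) (c : ℝ) :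
    AnalyticSet {y | c < ∑ i ∈ s, φ i y} := by
  induction s using Finset.induction_on generalizing c with
  | empty =>
    by_cases hc : c < 0
    · simpa [hc] using (isClosed_univ (X := Y)).analyticSet
    · simpa [hc] using analyticSet_empty
  | insert a s ha ih =>
    have : {y | c < ∑ i ∈ insert a s, φ i y}
        = ⋃ q : ℚ, {y | (q : ℝ) < φ a y} ∩ {y | c - q < ∑ i ∈ s, φ i y} := by
      ext y
      simp only [Finset.sum_insert ha, mem_ofPred_eq, mem_iUnion, mem_inter_iff]
      constructor
      · intro hy
        obtain ⟨q, h1, h2⟩ := exists_rat_btwn (sub_lt_iff_lt_add.2 hy)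
        exact ⟨q, h2, by linarith⟩
      · rintro ⟨q, h1, h2⟩
        linarith
    rw [this]
    exact AnalyticSet.iUnion fun q => analyticSet_inter (h a (Finset.mem_insert_self a s) q)
      (ih (fun i hi => h i (Finset.mem_insert_of_mem hi)) _)

/-- Novikov's generalized separation theorem for finitely many sets, in disjointed form: if
finitely many analytic sets have no common point in the Borel set `C`, then `C` has a Borel
partition whose `i`-th piece avoids the `i`-th analytic set. -/
lemma exists_partition_avoiding_fin [TopologicalSpace Y] [PolishSpace Y] [MeasurableSpace Y]
    [BorelSpace Y] (k : ℕ) (A : Fin k → Set Y) (hA : ∀ i, AnalyticSet (A i)) (C : Set Y)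
    (hC : MeasurableSet C) (hCA : C ∩ ⋂ i, A i = ∅) :
    ∃ D : Fin k → Set Y, (∀ i, MeasurableSet (D i)) ∧ Pairwise (Function.onFun Disjoint D) ∧
      (∀ i, Disjoint (D i) (A i)) ∧ ⋃ i, D i = C := by
  induction k generalizing C with
  | zero =>
    have : C = ∅ := by simpa using hCA
    exact ⟨fun _ => ∅, fun i => i.elim0, fun i => i.elim0, fun i => i.elim0, by simp [this]⟩
  | succ k ih =>
    have hA' : AnalyticSet (C ∩ ⋂ i : Fin k, A i.succ) := by
      have : C ∩ ⋂ i : Fin k, A i.succ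
          = ⋂ o : Option (Fin k), o.elim C fun i => A i.succ := by
        rw [iInter_option]; rfl
      rw [this]
      refine AnalyticSet.iInter fun o => ?_
      cases o with
      | none => exact hC.analyticSet
      | some i => exact hA _
    have hdisj : Disjoint (A 0) (C ∩ ⋂ i : Fin k, A i.succ) := by
      rw [Set.disjoint_left]
      rintro y h0 ⟨hyC, hy⟩
      have : y ∈ C ∩ ⋂ i, A i := by
        refine ⟨hyC, mem_iInter.2 fun i => ?_⟩
        induction i using Fin.cases with
        | zero => exact h0
        | succ i => exact mem_iInter.1 hy i
      rw [hCA] at this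
      exact this
    obtain ⟨u, h0u, hdu, hu⟩ := (hA 0).measurablySeparable hA' hdisj
    obtain ⟨D, hDm, hDd, hDA, hDC⟩ := ih (fun i => A i.succ) (fun i => hA _) (C ∩ u)
      (hC.inter hu) (by
        rw [inter_right_comm]
        exact hdu.inter_eq)
    have hDu : ∀ i, D i ⊆ C ∩ u := fun i => hDC ▸ subset_iUnion D i
    have hd : ∀ i, Disjoint (C \ u) (D i) := fun i =>
      disjoint_sdiff_left.mono_right ((hDu i).trans inter_subset_right)
    refine ⟨Fin.cons (C \ u) D, ?_, ?_, ?_, ?_⟩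
    · intro i
      induction i using Fin.cases with
      | zero => exact hC.diff hu
      | succ i => exact hDm i
    · intro i j hij
      induction i using Fin.cases with
      | zero =>
        induction j using Fin.cases with
        | zero => exact absurd rfl hij
        | succ j => exact hd j
      | succ i =>
        induction j using Fin.cases with
        | zero => exact (hd i).symm
        | succ j => exact hDd fun h => hij (congrArg Fin.succ h)
    · intro i
      induction i using Fin.cases with
      | zero => exact disjoint_sdiff_left.mono_right h0u
      | succ i => exact hDA i
    · ext y
      have hy : (∃ i, y ∈ D i) ↔ y ∈ C ∩ u := by rw [← hDC, mem_iUnion]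
      simp only [mem_iUnion, Fin.exists_fin_succ, Fin.cons_zero, Fin.cons_succ, hy]
      by_cases h : y ∈ u <;> simp [h]

lemma exists_partition_avoiding [TopologicalSpace Y] [PolishSpace Y] [MeasurableSpace Y]
    [BorelSpace Y] {ι : Type*} [Fintype ι] (A : ι → Set Y) (hA : ∀ i, AnalyticSet (A i))
    (hA0 : ⋂ i, A i = ∅) :
    ∃ D : ι → Set Y, (∀ i, MeasurableSet (D i)) ∧ Pairwise (Function.onFun Disjoint D) ∧
      (∀ i, Disjoint (D i) (A i)) ∧ ⋃ i, D i = univ := by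
  let e := Fintype.equivFin ι
  obtain ⟨D, hDm, hDd, hDA, hDC⟩ := exists_partition_avoiding_fin _ (fun i => A (e.symm i))
    (fun i => hA _) univ MeasurableSet.univ
    (by rw [univ_inter, ← hA0]; exact e.symm.surjective.iInter_comp A)
  refine ⟨fun i => D (e i), fun i => hDm _, fun i j hij => hDd (e.injective.ne hij),
    fun i => ?_, ?_⟩
  · simpa using hDA (e i)
  · rw [← hDC]; exact e.surjective.iUnion_comp D

/-! ### Gluing the partitions -/

variable [MetricSpace X] [CompactSpace X] [MeasurableSpace X] [BorelSpace X]
variable [MetricSpace Y] [CompactSpace Y] [MeasurableSpace Y] [BorelSpace Y]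

/-- there is a finite Borel partition `η` refining `U_0^{n-1}` such that for
every `y ∈ Y`, `Σ_{C ∈ η} sup_{x ∈ C ∩ π⁻¹ y} exp (f_n x) ≤ P_n(T,F,U,Y)` (sup over the empty
set being `0`, so only the sets meeting `π⁻¹ y` contribute). -/
theorem statement10
    (T : X → X) (S : Y → Y) (π : X → Y)
    (hT : Continuous T) (hTsurj : Function.Surjective T)
    (hS : Continuous S) (hSsurj : Function.Surjective S)
    (hπ : Continuous π) (hπsurj : Function.Surjective π)
    (hfac : π ∘ T = S ∘ π)
    (f : ℕ → X → ℝ) (hf : IsSubadditiveSeq T f)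
    (U : Finset (Set X)) (hU : IsBorelCover U) (n : ℕ) (hn : 1 ≤ n) :
    ∃ η : Finset (Set X), IsPartition η ∧ Refines η (dynCover T U n) ∧
      ∀ y : Y, (∑ C ∈ η, sSup ((fun x => Real.exp (f n x)) '' (C ∩ π ⁻¹' {y})))
        ≤ PnSup T π f U n := by
  have hW : IsBorelCover (dynCover T U n) := dynCover_isBorelCover hT.measurable hU n
  set W := dynCover T U n with hWdef
  let g : X → ℝ := fun x => Real.exp (f n x)
  have hgc : Continuous g := Real.continuous_exp.comp (hf.1 n hn)
  have hg : ∀ x, 0 ≤ g x := fun x => (Real.exp_pos _).le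
  obtain ⟨K, hK⟩ : ∃ K, ∀ x, g x ≤ K := by
    obtain ⟨K, hK⟩ := (isCompact_range hgc).bddAbove
    exact ⟨K, fun x => hK ⟨x, rfl⟩⟩
  let w : Fin W.card → Set X := fun i => (W.equivFin.symm i).1
  have hwW : ∀ i, w i ∈ W := fun i => (W.equivFin.symm i).2
  have hWw : ∀ v ∈ W, ∃ i, w i = v := fun v hv => ⟨W.equivFin ⟨v, hv⟩, by simp [w]⟩
  have hwm : ∀ i, MeasurableSet (w i) := fun i => hW.1 _ (hwW i)
  let γ : Equiv.Perm (Fin W.card) → Fin W.card → Set X := fun σ => disjointed (w ∘ σ)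
  have hγm : ∀ σ i, MeasurableSet (γ σ i) := fun σ i =>
    disjointedRec (p := MeasurableSet) (fun t j ht => ht.diff (hwm _)) (hwm _)
  have hγw : ∀ σ i, γ σ i ⊆ w (σ i) := fun σ i => disjointed_subset (w ∘ σ) i
  have hγU : ∀ σ, ⋃ i, γ σ i = univ := fun σ => by
    refine iUnion_disjointed.trans (eq_univ_of_forall fun x => ?_)
    have hx : x ∈ ⋃₀ (W : Set (Set X)) := hW.2 ▸ mem_univ x
    obtain ⟨v, hv, hxv⟩ := hx
    obtain ⟨i, rfl⟩ := hWw v hv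
    exact mem_iUnion.2 ⟨σ.symm i, by simpa using hxv⟩
  let Sg : Equiv.Perm (Fin W.card) → Y → ℝ := fun σ y => ∑ i, fiberSup π g (γ σ i) y
  let R : Y → Set ℝ := fun y => { r : ℝ | ∃ V : Finset (Set X), IsBorelCover V ∧ Refines V W ∧
      r = ∑ v ∈ V, fiberSup π g v y }
  have hPn : ∀ y, PnFiber T π f U n y = sInf (R y) := fun y => rfl
  have hRW : ∀ y, ∑ v ∈ W, fiberSup π g v y ∈ R y := fun y =>
    ⟨W, hW, fun v hv => ⟨v, hv, Subset.rfl⟩, rfl⟩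
  have hR0 : ∀ y, BddBelow (R y) := fun y => ⟨0, by
    rintro _ ⟨V, -, -, rfl⟩
    exact Finset.sum_nonneg fun v _ => fiberSup_nonneg hg _ _⟩
  -- Boundedness in `y` is what makes the real-valued supremum `PnSup` an upper bound.
  have hbdd : BddAbove (range fun y => PnFiber T π f U n y) := by
    refine ⟨∑ v ∈ W, max K 0, ?_⟩
    rintro _ ⟨y, rfl⟩
    show PnFiber T π f U n y ≤ _
    rw [hPn]
    exact (csInf_le (hR0 y) (hRW y)).trans (Finset.sum_le_sum fun v _ =>
      fiberSup_le (le_max_right _ _) fun x _ _ => (hK x).trans (le_max_left _ _))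
  have hopt : ∀ y, ∃ σ, Sg σ y ≤ PnSup T π f U n := fun y => by
    obtain ⟨σ, hσ⟩ := Finite.exists_min fun σ => Sg σ y
    refine ⟨σ, le_trans ?_ (le_ciSup hbdd y)⟩
    show _ ≤ PnFiber T π f U n y
    rw [hPn]
    refine le_csInf ⟨_, hRW y⟩ ?_
    rintro _ ⟨V, hV, hVW, rfl⟩
    obtain ⟨τ, hτ⟩ := exists_perm_sum_le (π := π) hg hK w V hV.2 (fun v hv => by
      obtain ⟨a, ha, hva⟩ := hVW v hv
      obtain ⟨i, rfl⟩ := hWw a ha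
      exact ⟨i, hva⟩) y
    exact (hσ τ).trans hτ
  obtain ⟨D, hDm, hDd, hDA, hDU⟩ := exists_partition_avoiding
    (fun σ => {y | PnSup T π f U n < Sg σ y})
    (fun σ => analyticSet_lt_sum _
      (fun i _ => analyticSet_lt_fiberSup hπ hgc.measurable hg hK (hγm σ i)) _)
    (eq_empty_of_forall_notMem fun y hy => by
      obtain ⟨σ, hσ⟩ := hopt y
      exact absurd (mem_iInter.1 hy σ) (not_lt.2 hσ))
  let p : Equiv.Perm (Fin W.card) × Fin W.card → Set X := fun q => π ⁻¹' (D q.1) ∩ γ q.1 q.2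
  have hpd : ∀ q q', q ≠ q' → Disjoint (p q) (p q') := by
    rintro ⟨σ, i⟩ ⟨τ, j⟩ hne
    by_cases hστ : σ = τ
    · subst hστ
      have hij : i ≠ j := fun h => hne (by rw [h])
      exact (disjoint_disjointed (w ∘ σ) hij).mono inter_subset_right inter_subset_right
    · exact ((hDd hστ).preimage π).mono inter_subset_left inter_subset_left
  refine ⟨Finset.univ.image p, ⟨?_, ?_, ?_⟩, ?_, ?_⟩
  · intro A hA
    obtain ⟨q, -, rfl⟩ := Finset.mem_image.1 hA
    exact (hπ.measurable (hDm _)).inter (hγm _ _)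
  · refine eq_univ_of_forall fun x => ?_
    obtain ⟨σ, hσ⟩ := mem_iUnion.1 (hDU ▸ mem_univ (π x) : π x ∈ ⋃ σ, D σ)
    obtain ⟨i, hi⟩ := mem_iUnion.1 (hγU σ ▸ mem_univ x : x ∈ ⋃ i, γ σ i)
    exact ⟨p (σ, i), by simp, hσ, hi⟩
  · intro A hA B hB hAB
    obtain ⟨q, -, rfl⟩ := Finset.mem_image.1 hA
    obtain ⟨q', -, rfl⟩ := Finset.mem_image.1 hB
    exact hpd q q' fun h => hAB (by rw [h])
  · intro A hA
    obtain ⟨q, -, rfl⟩ := Finset.mem_image.1 hA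
    exact ⟨_, hwW (q.1 q.2), inter_subset_right.trans (hγw _ _)⟩
  · intro y
    show ∑ C ∈ Finset.univ.image p, fiberSup π g C y ≤ _
    obtain ⟨σ, hσ⟩ := mem_iUnion.1 (hDU ▸ mem_univ y : y ∈ ⋃ σ, D σ)
    calc ∑ C ∈ Finset.univ.image p, fiberSup π g C y
        ≤ ∑ q, fiberSup π g (p q) y :=
          Finset.sum_image_le_of_nonneg fun C _ => fiberSup_nonneg hg _ _
      _ = ∑ τ, ∑ i, fiberSup π g (p (τ, i)) y := Fintype.sum_prod_type _
      _ = ∑ i, fiberSup π g (p (σ, i)) y := by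
          -- The fibre above `y ∈ D σ` does not meet the pieces indexed by other orderings.
          refine Fintype.sum_eq_single σ fun τ hτ => Finset.sum_eq_zero fun i _ => ?_
          refine le_antisymm (fiberSup_le le_rfl ?_) (fiberSup_nonneg hg _ _)
          rintro x ⟨hx, -⟩ rfl
          exact absurd hσ (Set.disjoint_left.1 (hDd hτ) hx)
      _ ≤ Sg σ y := Finset.sum_le_sum fun i _ => fiberSup_le (fiberSup_nonneg hg _ _) (by
          rintro x ⟨-, hx⟩ rfl
          exact le_fiberSup hK hx)
      _ ≤ PnSup T π f U n := not_lt.1 (Set.disjoint_left.1 (hDA σ) hσ)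

end RelLocVP

end
end
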